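/- Let tenacity(v) = t < l_m, base(v) = b, and let p be a minimum even (or odd) alternating path from b to v starting with an unmatched edge. Then every vertex of p lies in B_{b,t} ∪ {b}. -/

import Mathlib

attribute [local instance] Classical.propDecidable

variable {V : Type*} [DecidableEq V]

namespace MV

/-- A walk is alternating (w.r.t. matching `M`) in the sense used for alternating paths
starting at an unmatched vertex: the `i`-th edge is matched iff `i` is odd. -/
def IsAlt (G : SimpleGraph V) (M : G.Subgraph) {a b : V} (w : G.Walk a b) : Prop :=
  ∀ i (h : i < w.edges.length), (w.edges.get ⟨i, h⟩ ∈ M.edgeSet ↔ Odd i)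

/-- length of a minimum even alternating path from an unmatched vertex to `v`. -/
noncomputable def evenlevel (G : SimpleGraph V) (M : G.Subgraph) (v : V) : ℕ∞ :=
  sInf {n : ℕ∞ | ∃ (f : V) (w : G.Walk f v),
    f ∉ M.verts ∧ w.IsPath ∧ IsAlt G M w ∧ Even w.length ∧ n = (w.length : ℕ∞)}

/-- length of a minimum odd alternating path from an unmatched vertex to `v`. -/
noncomputable def oddlevel (G : SimpleGraph V) (M : G.Subgraph) (v : V) : ℕ∞ :=
  sInf {n : ℕ∞ | ∃ (f : V) (w : G.Walk f v),
    f ∉ M.verts ∧ w.IsPath ∧ IsAlt G M w ∧ Odd w.length ∧ n = (w.length : ℕ∞)}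

noncomputable def tenacity (G : SimpleGraph V) (M : G.Subgraph) (v : V) : ℕ∞ :=
  evenlevel G M v + oddlevel G M v

noncomputable def minlevel (G : SimpleGraph V) (M : G.Subgraph) (v : V) : ℕ∞ :=
  min (evenlevel G M v) (oddlevel G M v)

noncomputable def maxlevel (G : SimpleGraph V) (M : G.Subgraph) (v : V) : ℕ∞ :=
  max (evenlevel G M v) (oddlevel G M v)

/-- the length of a minimum length augmenting path w.r.t. `M` (`⊤` if none exists). -/
noncomputable def lm (G : SimpleGraph V) (M : G.Subgraph) : ℕ∞ :=
  sInf {n : ℕ∞ | ∃ (f g : V) (w : G.Walk f g), f ∉ M.verts ∧ g ∉ M.verts ∧ f ≠ g ∧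
    w.IsPath ∧ IsAlt G M w ∧ Odd w.length ∧ n = (w.length : ℕ∞)}

/-- `w` is a minimum even- or odd-length alternating path from an unmatched vertex to `v`
  (an `evenlevel(v)` or `oddlevel(v)` path). -/
def IsMinPathTo (G : SimpleGraph V) (M : G.Subgraph) (v f : V) (w : G.Walk f v) : Prop :=
  f ∉ M.verts ∧ w.IsPath ∧ IsAlt G M w ∧
    ((Even w.length ∧ (w.length : ℕ∞) = evenlevel G M v) ∨
     (Odd w.length ∧ (w.length : ℕ∞) = oddlevel G M v))

/-- `b` is the vertex of tenacity greater than `tenacity v` on `w` furthest from the start. -/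
def IsFurthestHigh (G : SimpleGraph V) (M : G.Subgraph) (v : V) {f v' : V}
    (w : G.Walk f v') (b : V) : Prop :=
  ∃ hb : b ∈ w.support, tenacity G M v < tenacity G M b ∧
    ∀ u, ∀ hu : u ∈ w.support, tenacity G M v < tenacity G M u →
      (w.takeUntil u hu).length ≤ (w.takeUntil b hb).length

/-- `b` is the base of `v`: the furthest higher-tenacity vertex on every minimum
even or odd alternating path to `v`. -/
def IsBase (G : SimpleGraph V) (M : G.Subgraph) (v b : V) : Prop :=
  ∀ (f : V) (w : G.Walk f v), IsMinPathTo G M v f w → IsFurthestHigh G M v w b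

/-- minimum even length alternating path from `b` to `v` starting with an unmatched edge
  (`evenlevel(b; v)`). -/
noncomputable def evenlevelFrom (G : SimpleGraph V) (M : G.Subgraph) (b v : V) : ℕ∞ :=
  sInf {n : ℕ∞ | ∃ w : G.Walk b v,
    w.IsPath ∧ IsAlt G M w ∧ Even w.length ∧ n = (w.length : ℕ∞)}

/-- minimum odd length alternating path from `b` to `v` starting with an unmatched edge
  (`oddlevel(b; v)`). -/
noncomputable def oddlevelFrom (G : SimpleGraph V) (M : G.Subgraph) (b v : V) : ℕ∞ :=
  sInf {n : ℕ∞ | ∃ w : G.Walk b v,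
    w.IsPath ∧ IsAlt G M w ∧ Odd w.length ∧ n = (w.length : ℕ∞)}

def Outer (G : SimpleGraph V) (M : G.Subgraph) (v : V) : Prop :=
  evenlevel G M v < oddlevel G M v

/-- The blossom `B_{b,t}`, defined recursively, relative to a base function `bse`. -/
noncomputable def blossom (G : SimpleGraph V) (M : G.Subgraph) (bse : V → V) :
    ℕ → V → Set V
  | 0, _ => ∅
  | 1, _ => ∅
  | (t + 2), b =>
      {v | tenacity G M v = ((t + 2 : ℕ) : ℕ∞) ∧ bse v = b} ∪
      ⋃ v ∈ {u | (u = b ∨ (tenacity G M u = ((t + 2 : ℕ) : ℕ∞) ∧ bse u = b)) ∧ Outer G M u},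
        blossom G M bse t v

/-- The nesting depth `N(B_{b,t})`. -/
noncomputable def nestDepth (G : SimpleGraph V) (M : G.Subgraph) (bse : V → V) :
    ℕ → V → ℕ
  | 0, _ => 0
  | 1, _ => 0
  | (t + 2), b =>
      if {v | tenacity G M v = ((t + 2 : ℕ) : ℕ∞) ∧ bse v = b}.Nonempty then
        1 + sSup ((fun v => nestDepth G M bse t v) ''
          {u | (u = b ∨ (tenacity G M u = ((t + 2 : ℕ) : ℕ∞) ∧ bse u = b)) ∧ Outer G M u})
      else nestDepth G M bse t b

/-- `bse` assigns to each vertex of tenacity `< l_m` its (unique) base. -/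
def BaseFn (G : SimpleGraph V) (M : G.Subgraph) (bse : V → V) : Prop :=
  ∀ v, tenacity G M v < lm G M → IsBase G M v (bse v)

/-- `u` is a predecessor of `v`: `(u,v)` is the last edge of some `minlevel(v)` path. -/
def IsPred (G : SimpleGraph V) (M : G.Subgraph) (u v : V) : Prop :=
  ∃ (f : V) (w : G.Walk f v), f ∉ M.verts ∧ w.IsPath ∧ IsAlt G M w ∧
    (w.length : ℕ∞) = minlevel G M v ∧
    0 < w.length ∧ w.getVert (w.length - 1) = u

/-- A bridge is an edge of `G` that is not a prop. -/
def IsBridge (G : SimpleGraph V) (M : G.Subgraph) (u v : V) : Prop :=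
  G.Adj u v ∧ ¬ IsPred G M u v ∧ ¬ IsPred G M v u

/-- tenacity of an edge. -/
noncomputable def edgeTenacity (G : SimpleGraph V) (M : G.Subgraph) (u v : V) : ℕ∞ :=
  if s(u, v) ∈ M.edgeSet then oddlevel G M u + oddlevel G M v + 1
  else evenlevel G M u + evenlevel G M v + 1

set_option linter.unusedSectionVars false

section Work

variable {G : SimpleGraph V} {M : G.Subgraph}

/-- alternating path as a function -/
def AP (G : SimpleGraph V) (M : G.Subgraph) (x : ℕ → V) (n : ℕ) : Prop :=
  (∀ i < n, G.Adj (x i) (x (i+1)) ∧ (M.Adj (x i) (x (i+1)) ↔ Odd i)) ∧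
  (∀ i ≤ n, ∀ j ≤ n, x i = x j → i = j)

/-- alternating path from a free vertex -/
def FP (G : SimpleGraph V) (M : G.Subgraph) (x : ℕ → V) (n : ℕ) : Prop :=
  AP G M x n ∧ x 0 ∉ M.verts

/-- level by parity -/
noncomputable def lev (G : SimpleGraph V) (M : G.Subgraph) (k : ℕ) (v : V) : ℕ∞ :=
  if Even k then evenlevel G M v else oddlevel G M v

/-- minimum path -/
def IsMin (G : SimpleGraph V) (M : G.Subgraph) (x : ℕ → V) (n : ℕ) : Prop :=
  FP G M x n ∧ lev G M n (x n) = n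

theorem AP_of_walk {a b : V} (w : G.Walk a b) (hp : w.IsPath) (ha : IsAlt G M w) :
    AP G M w.getVert w.length := by
  refine ⟨fun i hi => ⟨w.adj_getVert_succ hi, ?_⟩, ?_⟩
  · have h := ha i (by simpa using hi)
    rw [← h, List.get_eq_getElem, SimpleGraph.Walk.getElem_edges]
    simp
  · intro i hi j hj h
    exact hp.getVert_injOn hi hj h

theorem walk_aux (x : ℕ → V) (n : ℕ) (h : ∀ i < n, G.Adj (x i) (x (i+1))) :
    ∃ w : G.Walk (x 0) (x n), w.length = n ∧ ∀ i ≤ n, w.getVert i = x i := by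
  induction n generalizing x with
  | zero => exact ⟨SimpleGraph.Walk.nil, rfl, fun i hi => by
      obtain rfl : i = 0 := by omega
      simp⟩
  | succ n ih =>
    obtain ⟨w, hw, hg⟩ := ih (fun i => x (i+1)) (fun i hi => h (i+1) (by omega))
    refine ⟨SimpleGraph.Walk.cons (h 0 (by omega)) w, by simp [hw], ?_⟩
    intro i hi
    cases i with
    | zero => simp
    | succ i => simpa using hg i (by omega)

theorem walk_of_AP {x : ℕ → V} {n : ℕ} (h : AP G M x n) :
    ∃ w : G.Walk (x 0) (x n), w.length = n ∧ w.IsPath ∧ IsAlt G M w ∧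
      ∀ i ≤ n, w.getVert i = x i := by
  obtain ⟨w, hw, hg⟩ := walk_aux x n (fun i hi => (h.1 i hi).1)
  refine ⟨w, hw, ?_, ?_, hg⟩
  · rw [← SimpleGraph.Walk.IsPath.getVert_injOn_iff]
    intro i hi j hj hij
    simp only [Set.mem_ofPred_eq, hw] at hi hj
    rw [hg i hi, hg j hj] at hij
    exact h.2 i hi j hj hij
  · intro i hi
    have hi' : i < n := by simpa [hw] using hi
    rw [← (h.1 i hi').2, List.get_eq_getElem, SimpleGraph.Walk.getElem_edges,
      hg i (by omega), hg (i+1) (by omega)]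
    simp

theorem lev_congr {k l : ℕ} (h : Even k ↔ Even l) (v : V) : lev G M k v = lev G M l v := by
  unfold lev; simp [h]

theorem lev_even {k : ℕ} (h : Even k) (v : V) : lev G M k v = evenlevel G M v := by
  unfold lev; simp [h]

theorem lev_odd {k : ℕ} (h : ¬ Even k) (v : V) : lev G M k v = oddlevel G M v := by
  unfold lev; simp [h]

theorem ten_eq (k : ℕ) (v : V) : tenacity G M v = lev G M k v + lev G M (k+1) v := by
  unfold tenacity
  by_cases h : Even k
  · rw [lev_even h, lev_odd (by simpa [Nat.even_add_one] using h)]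
  · rw [lev_odd h, lev_even (by simpa [Nat.even_add_one] using h), add_comm]

theorem FP.lev_le {x : ℕ → V} {n : ℕ} (h : FP G M x n) : lev G M n (x n) ≤ n := by
  obtain ⟨w, hw, hp, ha, -⟩ := walk_of_AP h.1
  by_cases hn : Even n
  · rw [lev_even hn]
    exact sInf_le ⟨x 0, w, h.2, hp, ha, by rwa [hw], by rw [hw]⟩
  · rw [lev_odd hn]
    exact sInf_le ⟨x 0, w, h.2, hp, ha, by rwa [hw, ← Nat.not_even_iff_odd], by rw [hw]⟩

theorem FP.lev_le' {x : ℕ → V} {n k : ℕ} {v : V} (h : FP G M x n) (hv : x n = v)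
    (hk : Even k ↔ Even n) : lev G M k v ≤ n := by
  rw [lev_congr hk, ← hv]; exact h.lev_le

theorem exists_min {k : ℕ} {v : V} (h : lev G M k v ≠ ⊤) :
    ∃ x n, IsMin G M x n ∧ x n = v ∧ (Even n ↔ Even k) ∧ lev G M k v = n := by
  have key : ∃ x n, FP G M x n ∧ x n = v ∧ (Even n ↔ Even k) ∧ lev G M k v = n := by
    by_cases hk : Even k
    · rw [lev_even hk] at h ⊢
      have hne : {n : ℕ∞ | ∃ (f : V) (w : G.Walk f v),
        f ∉ M.verts ∧ w.IsPath ∧ IsAlt G M w ∧ Even w.length ∧ n = (w.length : ℕ∞)}.Nonempty := by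
        by_contra hc
        rw [Set.not_nonempty_iff_eq_empty] at hc
        exact h (by unfold evenlevel; rw [hc, sInf_empty])
      obtain ⟨f, w, hf, hp, ha, he, hn⟩ := csInf_mem hne
      refine ⟨w.getVert, w.length, ⟨AP_of_walk w hp ha, by simpa using hf⟩, by simp,
        by simp [he, hk], hn⟩
    · rw [lev_odd hk] at h ⊢
      have hne : {n : ℕ∞ | ∃ (f : V) (w : G.Walk f v),
        f ∉ M.verts ∧ w.IsPath ∧ IsAlt G M w ∧ Odd w.length ∧ n = (w.length : ℕ∞)}.Nonempty := by
        by_contra hc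
        rw [Set.not_nonempty_iff_eq_empty] at hc
        exact h (by unfold oddlevel; rw [hc, sInf_empty])
      obtain ⟨f, w, hf, hp, ha, he, hn⟩ := csInf_mem hne
      refine ⟨w.getVert, w.length, ⟨AP_of_walk w hp ha, by simpa using hf⟩, by simp,
        by simp [hk, he], hn⟩
  obtain ⟨x, n, hx, hv, hp, hl⟩ := key
  exact ⟨x, n, ⟨hx, by rw [hv, lev_congr hp, hl]⟩, hv, hp, hl⟩

theorem AP.take {x : ℕ → V} {n k : ℕ} (h : AP G M x n) (hk : k ≤ n) : AP G M x k :=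
  ⟨fun i hi => h.1 i (by omega), fun i hi j hj => h.2 i (by omega) j (by omega)⟩

theorem FP.take {x : ℕ → V} {n k : ℕ} (h : FP G M x n) (hk : k ≤ n) : FP G M x k :=
  ⟨h.1.take hk, h.2⟩

theorem AP.drop {x : ℕ → V} {n k : ℕ} (h : AP G M x n) (hk : k ≤ n) (he : Even k) :
    AP G M (fun i => x (k + i)) (n - k) := by
  refine ⟨fun i hi => ?_, fun i hi j hj hij => ?_⟩
  · have := h.1 (k+i) (by omega)
    refine ⟨this.1, this.2.trans ?_⟩
    rw [← Nat.not_even_iff_odd, ← Nat.not_even_iff_odd]; grind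
  · have := h.2 (k+i) (by omega) (k+j) (by omega) hij
    omega

/-- same parity splice -/
theorem splice_same {q p : ℕ → V} {i j n : ℕ} (hq : FP G M q i) (hp : AP G M p n)
    (hj : j ≤ n) (hij : q i = p j) (hpar : Even i ↔ Even j)
    (hd : ∀ i' < i, ∀ j', j ≤ j' → j' ≤ n → q i' ≠ p j') :
    ∃ r, FP G M r (i + (n - j)) ∧ r (i + (n - j)) = p n ∧ (∀ l ≤ i, r l = q l) ∧
      ∀ l, j ≤ l → r (i + (l - j)) = p l := by
  set r : ℕ → V := fun l => if l ≤ i then q l else p (l - i + j) with hr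
  have hr1 : ∀ l ≤ i, r l = q l := fun l hl => by simp [hr, hl]
  have hr2 : ∀ l, i ≤ l → r l = p (l - i + j) := fun l hl => by
    rcases hl.eq_or_lt with rfl | hl
    · simp [hr, hij]
    · simp [hr, not_le.mpr hl]
  refine ⟨r, ⟨⟨fun l hl => ?_, fun l hl m hm h => ?_⟩, ?_⟩, ?_, hr1, ?_⟩
  · rcases lt_or_ge l i with h | h
    · rw [hr1 l (by omega), hr1 (l+1) (by omega)]
      exact hq.1.1 l h
    · rw [hr2 l h, hr2 (l+1) (by omega)]
      have := hp.1 (l - i + j) (by omega)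
      rw [show l + 1 - i + j = l - i + j + 1 by omega]
      refine ⟨this.1, this.2.trans ?_⟩
      rw [← Nat.not_even_iff_odd, ← Nat.not_even_iff_odd]
      grind
  · rcases lt_or_ge l i with h1 | h1 <;> rcases lt_or_ge m i with h2 | h2
    · rw [hr1 l (by omega), hr1 m (by omega)] at h
      exact hq.1.2 l h1.le m h2.le h
    · rw [hr1 l (by omega), hr2 m h2] at h
      exact absurd h (hd l h1 _ (by omega) (by omega))
    · rw [hr2 l h1, hr1 m (by omega)] at h
      exact absurd h.symm (hd m h2 _ (by omega) (by omega))
    · rw [hr2 l h1, hr2 m h2] at h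
      have := hp.2 _ (by omega) _ (by omega) h
      omega
  · rw [hr1 0 (by omega)]; exact hq.2
  · rw [hr2 _ (by omega)]; congr 1; omega
  · intro l hl
    rw [hr2 _ (by omega)]; congr 1; omega

/-- opposite parity splice -/
theorem splice_opp {q p : ℕ → V} {i j k n : ℕ} (hq : FP G M q i) (hp : AP G M p n)
    (hj : j ≤ n) (hk : k ≤ j) (hij : q i = p j) (hpar : Even i ↔ ¬ Even j)
    (hd : ∀ i' < i, ∀ j', k ≤ j' → j' ≤ j → q i' ≠ p j') :
    ∃ r, FP G M r (i + (j - k)) ∧ r (i + (j - k)) = p k ∧ (∀ l ≤ i, r l = q l) ∧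
      ∀ l, k ≤ l → l ≤ j → r (i + (j - l)) = p l := by
  set r : ℕ → V := fun l => if l ≤ i then q l else p (j - (l - i)) with hr
  have hr1 : ∀ l ≤ i, r l = q l := fun l hl => by simp [hr, hl]
  have hr2 : ∀ l, i ≤ l → r l = p (j - (l - i)) := fun l hl => by
    rcases hl.eq_or_lt with rfl | hl
    · simp [hr, hij]
    · simp [hr, not_le.mpr hl]
  refine ⟨r, ⟨⟨fun l hl => ?_, fun l hl m hm h => ?_⟩, ?_⟩, ?_, hr1, ?_⟩
  · rcases lt_or_ge l i with h | h
    · rw [hr1 l (by omega), hr1 (l+1) (by omega)]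
      exact hq.1.1 l h
    · rw [hr2 l h, hr2 (l+1) (by omega)]
      have := hp.1 (j - (l + 1 - i)) (by omega)
      rw [show j - (l + 1 - i) + 1 = j - (l - i) by omega] at this
      refine ⟨this.1.symm, (M.adj_comm _ _).trans (this.2.trans ?_)⟩
      rw [← Nat.not_even_iff_odd, ← Nat.not_even_iff_odd]
      grind
  · rcases lt_or_ge l i with h1 | h1 <;> rcases lt_or_ge m i with h2 | h2
    · rw [hr1 l (by omega), hr1 m (by omega)] at h
      exact hq.1.2 l h1.le m h2.le h
    · rw [hr1 l (by omega), hr2 m h2] at h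
      exact absurd h (hd l h1 _ (by omega) (by omega))
    · rw [hr2 l h1, hr1 m (by omega)] at h
      exact absurd h.symm (hd m h2 _ (by omega) (by omega))
    · rw [hr2 l h1, hr2 m h2] at h
      have := hp.2 _ (by omega) _ (by omega) h
      omega
  · rw [hr1 0 (by omega)]; exact hq.2
  · rw [hr2 _ (by omega)]; congr 1; omega
  · intro l hl hl'
    rw [hr2 _ (by omega)]; congr 1; omega

theorem first_hit {q p : ℕ → V} {m k n : ℕ} (h : ∃ j, k ≤ j ∧ j ≤ n ∧ q m = p j) :
    ∃ i ≤ m, ∃ j, k ≤ j ∧ j ≤ n ∧ q i = p j ∧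
      ∀ i' < i, ∀ j', k ≤ j' → j' ≤ n → q i' ≠ p j' := by
  classical
  have hex : ∃ i, ∃ j, k ≤ j ∧ j ≤ n ∧ q i = p j := ⟨m, h⟩
  obtain ⟨j, h1, h2, h3⟩ := Nat.find_spec hex
  refine ⟨Nat.find hex, Nat.find_min' hex h, j, h1, h2, h3, ?_⟩
  intro i' hi' j' hj1 hj2 he
  exact Nat.find_min hex hi' ⟨j', hj1, hj2, he⟩

/-- crossing lemma -/
theorem crossing {q p : ℕ → V} {m k n : ℕ} (hq : FP G M q m) (hp : AP G M p n)
    (h : ∃ j, k ≤ j ∧ j ≤ n ∧ q m = p j) :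
    ∃ i ≤ m, ∃ j, k ≤ j ∧ j ≤ n ∧
      (((Even i ↔ Even j) ∧ lev G M n (p n) ≤ ((i + (n - j) : ℕ) : ℕ∞)) ∨
       ((Even i ↔ ¬ Even j) ∧ lev G M (k+1) (p k) ≤ ((i + (j - k) : ℕ) : ℕ∞))) := by
  obtain ⟨i, hi, j, hkj, hjn, hij, hd⟩ := first_hit h
  refine ⟨i, hi, j, hkj, hjn, ?_⟩
  by_cases hpar : Even i ↔ Even j
  · left
    obtain ⟨r, hr, hre, -⟩ := splice_same (hq.take hi) hp hjn hij hpar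
      (fun i' hi' j' h1 h2 => hd i' hi' j' (by omega) h2)
    exact ⟨hpar, hr.lev_le' hre (by grind)⟩
  · right
    have hpar' : Even i ↔ ¬ Even j := by tauto
    obtain ⟨r, hr, hre, -⟩ := splice_opp (k := k) (hq.take hi) hp hjn hkj hij hpar'
      (fun i' hi' j' h1 h2 => hd i' hi' j' (by omega) (by omega))
    exact ⟨hpar', hr.lev_le' hre (by grind)⟩

/-- BFS honesty -/
theorem honest {p : ℕ → V} {n k : ℕ} (hp : IsMin G M p n) (hk : k ≤ n)
    (hfin : tenacity G M (p n) ≠ ⊤)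
    (hten : tenacity G M (p n) ≤ tenacity G M (p k)) : IsMin G M p k := by
  refine ⟨hp.1.take hk, ?_⟩
  by_contra hne
  have hlt : lev G M k (p k) < k := lt_of_le_of_ne (hp.1.take hk).lev_le hne
  obtain ⟨q, m, hq, hqe, hqp, hqm⟩ := exists_min (hlt.ne_top)
  rw [hqm] at hlt
  have hmk : m < k := by exact_mod_cast hlt
  rw [ten_eq n, hp.2] at hfin hten
  have hfin2 : lev G M (n+1) (p n) ≠ ⊤ := by
    intro h; simp [h] at hfin
  obtain ⟨r, n', hr, hre, hrp, hrn⟩ := exists_min hfin2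
  rw [hrn, ten_eq k, hqm] at hten
  have fin : ∀ A : ℕ, lev G M (k+1) (p k) ≤ (A : ℕ∞) → n + n' ≤ m + A := by
    intro A hA
    have : (n : ℕ∞) + n' ≤ m + A := hten.trans (by gcongr)
    exact_mod_cast this
  obtain ⟨i, hi, j, hkj, hjn, hc⟩ := crossing hq.1 hp.1.1 ⟨k, le_refl k, hk, hqe⟩
  obtain ⟨i2, hi2, j2, hkj2, hjn2, hc2⟩ := crossing hr.1 hp.1.1 ⟨n, hk, le_refl n, hre⟩
  rw [hp.2] at hc hc2
  have c1 : lev G M (k+1) (p k) ≤ ((i + (j - k) : ℕ) : ℕ∞) := by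
    rcases hc with ⟨-, h⟩ | ⟨-, h⟩
    · have : n ≤ i + (n - j) := by exact_mod_cast h
      omega
    · exact h
  have c1' := fin _ c1
  rcases hc2 with ⟨-, h⟩ | ⟨-, h⟩
  · have : n ≤ i2 + (n - j2) := by exact_mod_cast h
    omega
  · have := fin _ h
    omega


theorem mate_unique (hM : M.IsMatching) {a b c : V} (h1 : M.Adj a b) (h2 : M.Adj a c) : b = c := by
  obtain ⟨w, -, hw⟩ := hM (M.edge_vert h1)
  rw [hw b h1, hw c h2]

theorem FP.extend {x : ℕ → V} {n : ℕ} {u : V} (h : FP G M x n) (hadj : G.Adj (x n) u)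
    (hMa : M.Adj (x n) u ↔ Odd n) (hu : ∀ i ≤ n, x i ≠ u) :
    ∃ r, FP G M r (n+1) ∧ r (n+1) = u ∧ ∀ i ≤ n, r i = x i := by
  set r : ℕ → V := fun i => if i ≤ n then x i else u with hr
  have h1 : ∀ i ≤ n, r i = x i := fun i hi => by simp [hr, hi]
  have h2 : r (n+1) = u := by simp [hr]
  refine ⟨r, ⟨⟨fun i hi => ?_, fun i hi j hj hij => ?_⟩, ?_⟩, h2, h1⟩
  · rcases Nat.lt_succ_iff_lt_or_eq.mp hi with h' | rfl
    · rw [h1 i (by omega), h1 (i+1) (by omega)]; exact h.1.1 i h'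
    · rw [h1 i le_rfl, h2]; exact ⟨hadj, hMa⟩
  · rcases Nat.le_succ_iff.mp hi with hi' | rfl <;> rcases Nat.le_succ_iff.mp hj with hj' | rfl
    · rw [h1 i hi', h1 j hj'] at hij; exact h.1.2 i hi' j hj' hij
    · rw [h1 i hi', h2] at hij; exact absurd hij (hu i hi')
    · rw [h1 j hj', h2] at hij; exact absurd hij.symm (hu j hj')
    · rfl
  · rw [h1 0 (by omega)]; exact h.2

theorem AP.adj_odd {x : ℕ → V} {n : ℕ} (h : AP G M x n) {i : ℕ} (hi : i < n) (ho : ¬ Even i) :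
    M.Adj (x i) (x (i+1)) := (h.1 i hi).2.2 (by simpa using ho)

/-- the mate of the last vertex of an odd path is not on it -/
theorem mate_notin (hM : M.IsMatching) {x : ℕ → V} {n : ℕ} {u : V} (h : FP G M x n)
    (hn : ¬ Even n) (hu : M.Adj (x n) u) : ∀ i ≤ n, x i ≠ u := by
  intro i hi he
  by_cases hie : Even i
  · rcases Nat.eq_zero_or_pos i with rfl | hpos
    · exact h.2 (he ▸ M.edge_vert hu.symm)
    · have h1 := h.1.adj_odd (i := i - 1) (by omega) (by grind)
      rw [show i - 1 + 1 = i by omega, he] at h1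
      have := h.1.2 _ (by omega) _ le_rfl (mate_unique hM h1.symm hu.symm)
      omega
  · rcases hi.eq_or_lt with rfl | hlt
    · exact (M.adj_sub hu).ne he
    · have h1 := h.1.adj_odd hlt hie
      rw [he] at h1
      have := h.1.2 _ (by omega) _ le_rfl (mate_unique hM h1 hu.symm)
      grind

theorem lev_parity {k n : ℕ} {v : V} (h : lev G M k v = n) : Even n ↔ Even k := by
  obtain ⟨x, m, -, -, h1, h2⟩ := exists_min (G := G) (M := M) (k := k) (v := v) (by simp [h])
  rw [h] at h2
  have : n = m := by exact_mod_cast h2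
  rw [this, h1]

theorem pred_mate (hM : M.IsMatching) {x : ℕ → V} {n : ℕ} {u' : V} (h : FP G M x n)
    (hn : Even n) (hu : M.Adj (x n) u') : 1 ≤ n ∧ x (n - 1) = u' := by
  have h1 : 1 ≤ n := by
    rcases Nat.eq_zero_or_pos n with rfl | h1
    · exact absurd (M.edge_vert hu) h.2
    · exact h1
  have h2 := h.1.adj_odd (i := n - 1) (by omega) (by grind)
  rw [show n - 1 + 1 = n by omega] at h2
  exact ⟨h1, mate_unique hM h2.symm hu⟩

theorem mate_lev (hM : M.IsMatching) {u u' : V} (hu : M.Adj u u') :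
    evenlevel G M u = oddlevel G M u' + 1 := by
  apply le_antisymm
  · by_cases h : oddlevel G M u' = ⊤
    · simp [h]
    rw [← lev_odd (k := 1) (by simp)] at h ⊢
    obtain ⟨x, n, hx, hxe, hp, hl⟩ := exists_min h
    have hn : ¬ Even n := by simp [hp]
    obtain ⟨r, hr, hre, -⟩ := hx.1.extend (u := u) (hxe ▸ (M.adj_sub hu).symm)
      (by rw [hxe]; simp [hu.symm, Nat.not_even_iff_odd.mp hn])
      (mate_notin hM hx.1 hn (hxe ▸ hu.symm))
    rw [hl, ← lev_even (k := 0) (by simp)]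
    exact_mod_cast hr.lev_le' hre (by grind)
  · by_cases h : evenlevel G M u = ⊤
    · simp [h]
    rw [← lev_even (k := 0) (by simp)] at h ⊢
    obtain ⟨x, n, hx, hxe, hp, hl⟩ := exists_min h
    have hn : Even n := by simp [hp]
    obtain ⟨h1, h2⟩ := pred_mate hM hx.1 hn (hxe ▸ hu)
    rw [hl, ← lev_odd (k := 1) (by simp)]
    have := (hx.1.take (k := n - 1) (by omega)).lev_le' (k := 1) h2 (by grind)
    calc _ ≤ ((n - 1 : ℕ) : ℕ∞) + 1 := by gcongr
      _ = n := by exact_mod_cast (by omega : n - 1 + 1 = n)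

theorem mate_ten (hM : M.IsMatching) {u u' : V} (hu : M.Adj u u') :
    tenacity G M u = tenacity G M u' := by
  unfold tenacity
  rw [mate_lev hM hu, mate_lev hM hu.symm]; ring

theorem IsMin.pred (hM : M.IsMatching) {x : ℕ → V} {n : ℕ} (h : IsMin G M x n) (hn : Even n)
    (h1 : 1 ≤ n) : IsMin G M x (n - 1) := by
  refine ⟨h.1.take (by omega), ?_⟩
  have h2 := h.1.1.adj_odd (i := n - 1) (by omega) (by grind)
  rw [show n - 1 + 1 = n by omega] at h2
  have h3 := mate_lev hM h2.symm
  have h4 := h.2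
  rw [lev_even hn, h3] at h4
  rw [lev_odd (by grind)]
  have : ((n - 1 : ℕ) : ℕ∞) + 1 = n := by exact_mod_cast (by omega : n - 1 + 1 = n)
  rw [← this] at h4
  exact ENat.add_left_injective_of_ne_top ENat.one_ne_top h4

theorem free_ten {u : V} (hu : u ∉ M.verts) : lm G M ≤ tenacity G M u := by
  unfold tenacity
  refine le_trans ?_ le_add_self
  by_cases h : oddlevel G M u = ⊤
  · simp [h]
  rw [← lev_odd (k := 1) (by simp)] at h ⊢
  obtain ⟨x, n, hx, hxe, hp, hl⟩ := exists_min h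
  have hn : ¬ Even n := by simp [hp]
  obtain ⟨w, hw, h1, h2, -⟩ := walk_of_AP hx.1.1
  rw [hl]
  refine sInf_le ⟨_, _, w, hx.1.2, hxe ▸ hu, ?_, h1, h2, by simpa [hw] using hn, by rw [hw]⟩
  intro he
  have := hx.1.1.2 0 (by omega) n le_rfl he
  subst this
  simp at hn

theorem even_free {x : V} (h : evenlevel G M x = 0) : x ∉ M.verts := by
  have h' : lev G M 0 x = ((0:ℕ):ℕ∞) := by rw [lev_even (by simp), h]; rfl
  obtain ⟨y, n, hx, hxe, hp, hl⟩ := exists_min (G := G) (M := M) (k := 0) (v := x) (by simp [h'])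
  rw [h'] at hl
  have : 0 = n := by exact_mod_cast hl
  subst this
  rw [← hxe]; exact hx.1.2

theorem free_even {x : V} (h : x ∉ M.verts) : evenlevel G M x = 0 := by
  have : FP G M (fun _ => x) 0 := ⟨⟨by simp, by simp⟩, h⟩
  have := this.lev_le
  rw [lev_even (by simp)] at this
  simpa using this

/-- finite tenacity gives natural levels -/
theorem ten_nat {u : V} (h : tenacity G M u ≠ ⊤) : ∃ e o : ℕ, Even e ∧ ¬ Even o ∧
    evenlevel G M u = e ∧ oddlevel G M u = o ∧ tenacity G M u = ((e + o : ℕ) : ℕ∞) := by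
  unfold tenacity at h ⊢
  obtain ⟨h1, h2⟩ := WithTop.add_ne_top.mp h
  obtain ⟨e, he⟩ := ENat.ne_top_iff_exists.mp h1
  obtain ⟨o, ho⟩ := ENat.ne_top_iff_exists.mp h2
  refine ⟨e, o, ?_, ?_, he.symm, ho.symm, by rw [← he, ← ho]; push_cast; rfl⟩
  · exact (lev_parity (G := G) (M := M) (v := u) (k := 0) (by rw [lev_even (by simp), he])).2 (by simp)
  · intro hh
    exact absurd ((lev_parity (G := G) (M := M) (v := u) (k := 1) (by rw [lev_odd (by simp), ho])).1 hh) (by simp)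

theorem base_idx {bse : V → V} (hM : M.IsMatching) (hb : BaseFn G M bse) {x : ℕ → V} {n : ℕ}
    (hx : IsMin G M x n)
    (hlt : tenacity G M (x n) < lm G M) :
    ∃ i ≤ n, x i = bse (x n) ∧ tenacity G M (x n) < tenacity G M (x i) ∧
      (∀ j, i < j → j ≤ n → tenacity G M (x j) ≤ tenacity G M (x n)) ∧ Even i := by
  obtain ⟨w, hw, h1, h2, h3⟩ := walk_of_AP hx.1.1
  have hmin : IsMinPathTo G M (x n) (x 0) w := by
    refine ⟨hx.1.2, h1, h2, ?_⟩
    have := hx.2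
    rw [hw]
    by_cases hn : Even n
    · rw [lev_even hn] at this
      exact Or.inl ⟨hn, this.symm⟩
    · rw [lev_odd hn] at this
      exact Or.inr ⟨by simpa using hn, this.symm⟩
  obtain ⟨hbs, hten, hfar⟩ := hb _ hlt _ _ hmin
  have idx : ∀ u (hu : u ∈ w.support), (w.takeUntil u hu).length ≤ n ∧
      x (w.takeUntil u hu).length = u := by
    intro u hu
    have hl : (w.takeUntil u hu).length ≤ n := (w.length_takeUntil_le_length hu).trans hw.le
    refine ⟨hl, ?_⟩
    rw [← h3 _ hl]
    exact w.getVert_length_takeUntil hu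
  obtain ⟨hi, hxi⟩ := idx _ hbs
  set i := (w.takeUntil _ hbs).length with hidef
  have hfar' : ∀ j, i < j → j ≤ n → tenacity G M (x j) ≤ tenacity G M (x n) := by
    intro j hij hj
    by_contra hc
    push Not at hc
    have hu : x j ∈ w.support := by
      rw [← h3 j hj]; exact w.getVert_mem_support j
    have := hfar (x j) hu hc
    obtain ⟨a, b⟩ := idx _ hu
    have := hx.1.1.2 _ a _ hj b
    omega
  refine ⟨i, hi, hxi, by rw [hxi]; exact hten, hfar', ?_⟩
  by_contra ho
  have hin : i < n := by
    rcases hi.eq_or_lt with h | h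
    · rw [← hxi, h] at hten; exact absurd hten (lt_irrefl _)
    · exact h
  have hm := mate_ten hM (hx.1.1.adj_odd hin ho)
  have := hfar' (i+1) (by omega) (by omega)
  rw [← hm, hxi] at this
  exact absurd hten (not_lt.mpr this)

/-- iterated base -/
noncomputable def Kf (G : SimpleGraph V) (M : G.Subgraph) (bse : V → V) : ℕ → V → V
  | 0, u => u
  | (s+1), u => if tenacity G M (Kf G M bse s u) = ((s+1:ℕ):ℕ∞) then bse (Kf G M bse s u)
      else Kf G M bse s u

theorem enat_succ_lt {a : ℕ∞} {s : ℕ} (h : (s:ℕ∞) < a) (h' : a ≠ ((s+1:ℕ):ℕ∞)) :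
    ((s+1:ℕ):ℕ∞) < a := by
  cases a with
  | top => exact ENat.natCast_lt_top _
  | coe a =>
    have h1 : s < a := by exact_mod_cast h
    have h2 : a ≠ s + 1 := by exact_mod_cast h'
    exact_mod_cast (by omega : s + 1 < a)

variable {bse : V → V}

theorem ten_pos (u : V) : ((0:ℕ):ℕ∞) < tenacity G M u := by
  by_cases h : tenacity G M u = ⊤
  · rw [h]; exact ENat.natCast_lt_top _
  · obtain ⟨e, o, he, ho, -, -, h⟩ := ten_nat h
    rw [h]
    have : o ≠ 0 := by rintro rfl; simp at ho
    exact_mod_cast (by omega : 0 < e + o)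

theorem K_high {s : ℕ} {u : V} (h : (s:ℕ∞) < tenacity G M u) : Kf G M bse s u = u := by
  induction s with
  | zero => rfl
  | succ s ih =>
    have hs : (s:ℕ∞) < tenacity G M u := lt_trans (by exact_mod_cast Nat.lt_succ_self s) h
    simp only [Kf, ih hs]
    rw [if_neg h.ne']

theorem K_path (hM : M.IsMatching) (hb : BaseFn G M bse) {s : ℕ} (hs : (s:ℕ∞) < lm G M)
    {w : ℕ → V} {n : ℕ} (hw : IsMin G M w n) :
    ∃ i ≤ n, w i = Kf G M bse s (w n) ∧ (s:ℕ∞) < tenacity G M (w i) ∧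
      (∀ j, i < j → j ≤ n → tenacity G M (w j) ≤ s) ∧ IsMin G M w i ∧ (i < n → Even i) := by
  induction s with
  | zero => exact ⟨n, le_rfl, rfl, ten_pos _, fun j h1 h2 => by omega, hw, by simp⟩
  | succ s ih =>
    have hs' : (s:ℕ∞) < lm G M := lt_trans (by exact_mod_cast Nat.lt_succ_self s) hs
    obtain ⟨i, hi, h1, h2, h3, h4, h5⟩ := ih hs'
    by_cases hc : tenacity G M (w i) = ((s+1:ℕ):ℕ∞)
    · obtain ⟨i', hi', g1, g2, g3, g4⟩ := base_idx hM hb h4 (hc ▸ hs)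
      refine ⟨i', by omega, ?_, hc ▸ g2, ?_, ?_, fun _ => g4⟩
      · simp only [Kf]; rw [← h1, if_pos hc, g1]
      · intro j hj1 hj2
        rcases le_or_gt j i with h | h
        · rw [← hc]; exact g3 j hj1 h
        · exact (h3 j h hj2).trans (by exact_mod_cast Nat.le_succ s)
      · exact honest h4 hi' (by rw [hc]; simp) g2.le
    · refine ⟨i, hi, ?_, enat_succ_lt h2 hc, ?_, h4, h5⟩
      · simp only [Kf]; rw [← h1, if_neg hc]
      · exact fun j h6 h7 => (h3 j h6 h7).trans (by exact_mod_cast Nat.le_succ s)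

theorem low_min {s : ℕ} {u : V} (h : tenacity G M u ≤ s) (k : ℕ) :
    ∃ x n, IsMin G M x n ∧ x n = u ∧ (Even n ↔ Even k) ∧ lev G M k u = n := by
  apply exists_min
  intro hc
  rw [ten_eq k, hc] at h
  simp at h

theorem K_gt (hM : M.IsMatching) (hb : BaseFn G M bse) {s : ℕ} (hs : (s:ℕ∞) < lm G M) (u : V) :
    (s:ℕ∞) < tenacity G M (Kf G M bse s u) := by
  rcases lt_or_ge (s:ℕ∞) (tenacity G M u) with h | h
  · rwa [K_high h]
  · obtain ⟨x, n, hx, hxe, -⟩ := low_min h 0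
    obtain ⟨i, hi, h1, h2, -⟩ := K_path hM hb hs hx
    rw [← hxe, ← h1]; exact h2

theorem K_idem (hM : M.IsMatching) (hb : BaseFn G M bse) {s : ℕ} (hs : (s:ℕ∞) < lm G M) (u : V) :
    Kf G M bse s (Kf G M bse s u) = Kf G M bse s u := K_high (K_gt hM hb hs u)

theorem K_rep (hM : M.IsMatching) (hb : BaseFn G M bse) {s : ℕ} (hs : (s:ℕ∞) < lm G M) {u : V} :
    Kf G M bse s u = u ↔ (s:ℕ∞) < tenacity G M u :=
  ⟨fun h => h ▸ K_gt hM hb hs u, K_high⟩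

theorem K_mono {s s' : ℕ} (hs : s ≤ s') {a z : V} (h : Kf G M bse s a = Kf G M bse s z) :
    Kf G M bse s' a = Kf G M bse s' z := by
  induction s', hs using Nat.le_induction with
  | base => exact h
  | succ s' _ ih => simp only [Kf, ih]

theorem K_comp (hM : M.IsMatching) (hb : BaseFn G M bse) {s s' : ℕ} (hs : (s:ℕ∞) < lm G M)
    (h : s ≤ s') (u : V) : Kf G M bse s' (Kf G M bse s u) = Kf G M bse s' u :=
  K_mono h (K_idem hM hb hs u)

/-- last high vertex uniqueness -/
theorem K_last (hM : M.IsMatching) (hb : BaseFn G M bse) {s : ℕ} (hs : (s:ℕ∞) < lm G M)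
    {w : ℕ → V} {m n : ℕ} (hw : IsMin G M w n) (hm : IsMin G M w m) (hmn : m ≤ n)
    (h : ∀ j, m < j → j ≤ n → tenacity G M (w j) ≤ s) :
    Kf G M bse s (w m) = Kf G M bse s (w n) := by
  obtain ⟨i, hi, h1, h2, h3, -⟩ := K_path hM hb hs hw
  obtain ⟨i', hi', g1, g2, g3, -⟩ := K_path hM hb hs hm
  rw [← h1, ← g1]
  rcases lt_trichotomy i i' with hc | hc | hc
  · exact absurd g2 (not_lt.mpr (h3 i' hc (by omega)))
  · rw [hc]
  · rcases le_or_gt i m with hc' | hc'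
    · exact absurd h2 (not_lt.mpr (g3 i hc hc'))
    · exact absurd h2 (not_lt.mpr (h i hc' hi))

theorem K_mates (hM : M.IsMatching) (hb : BaseFn G M bse) {s : ℕ} (hs : (s:ℕ∞) < lm G M)
    {u u' : V} (hu : M.Adj u u') (hl : tenacity G M u ≤ s) :
    Kf G M bse s u = Kf G M bse s u' := by
  obtain ⟨x, n, hx, hxe, hp, -⟩ := low_min hl 0
  have hn : Even n := by simp [hp]
  obtain ⟨h1, h2⟩ := pred_mate hM hx.1 hn (hxe ▸ hu)
  rw [← h2]; conv_lhs => rw [← hxe]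
  refine (K_last hM hb hs hx (hx.pred hM hn h1) (by omega) fun j h3 h4 => ?_).symm
  obtain rfl : j = n := by omega
  rw [hxe]; exact hl

theorem K_low (hM : M.IsMatching) (hb : BaseFn G M bse) {s : ℕ} (hs : (s:ℕ∞) < lm G M)
    {u : V} {e o : ℕ} (he : evenlevel G M u = e) (ho : oddlevel G M u = o) (hl : e + o ≤ s) :
    ∃ m : ℕ, Even m ∧ evenlevel G M (Kf G M bse s u) = m ∧ m < e ∧ m < o := by
  have hl' : tenacity G M u ≤ s := by
    unfold tenacity; rw [he, ho]; exact_mod_cast hl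
  have key : ∀ k, ∃ m : ℕ, Even m ∧ evenlevel G M (Kf G M bse s u) = m ∧ m < lev G M k u := by
    intro k
    obtain ⟨x, n, hx, hxe, hp, hl2⟩ := low_min hl' k
    obtain ⟨i, hi, h1, h2, h3, h4, h5⟩ := K_path hM hb hs hx
    have hin : i < n := by
      rcases hi.eq_or_lt with rfl | h
      · rw [hxe] at h2; exact absurd h2 (not_lt.mpr hl')
      · exact h
    refine ⟨i, h5 hin, ?_, ?_⟩
    · rw [← hxe, ← h1, ← h4.2, lev_even (h5 hin)]
    · rw [hl2]; exact_mod_cast hin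
  obtain ⟨m, a1, a2, a3⟩ := key 0
  obtain ⟨m', b1, b2, b3⟩ := key 1
  rw [lev_even (by simp), he] at a3
  rw [lev_odd (by simp), ho] at b3
  rw [a2] at b2
  have : m = m' := by exact_mod_cast b2
  subst this
  exact ⟨m, a1, a2, by exact_mod_cast a3, by exact_mod_cast b3⟩

theorem ten_odd {u : V} {s : ℕ} (h : tenacity G M u = s) : ¬ Even s := by
  obtain ⟨e, o, he, ho, -, -, h'⟩ := ten_nat (G := G) (M := M) (u := u) (by simp [h])
  rw [h] at h'
  have : s = e + o := by exact_mod_cast h'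
  subst this
  grind

/-- signed count of internal edges -/
noncomputable def Nn (κ : V → V) (p : ℕ → V) (n : ℕ) : ℤ :=
  ∑ i ∈ Finset.range n, (-1)^i * (if κ (p i) = κ (p (i+1)) then 1 else 0)

/-- missing representatives -/
noncomputable def miss (κ : V → V) (p : ℕ → V) (n : ℕ) : Finset V :=
  (Finset.range (n+1)).image (fun i => κ (p i)) \ (Finset.range (n+1)).image p

theorem mem_miss {κ : V → V} {p : ℕ → V} {n : ℕ} {r : V} :
    r ∈ miss κ p n ↔ (∃ i ≤ n, κ (p i) = r) ∧ ∀ i ≤ n, p i ≠ r := by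
  simp [miss, Nat.lt_succ_iff]

theorem Nn_succ (κ : V → V) (p : ℕ → V) (n : ℕ) :
    Nn κ p (n+1) = Nn κ p n + (-1)^n * (if κ (p n) = κ (p (n+1)) then 1 else 0) := by
  simp [Nn, Finset.sum_range_succ]

theorem count {κ : V → V} (hid : ∀ u, κ (κ u) = κ u)
    (hm1 : ∀ u u', M.Adj u u' → κ u = u → κ u' = u')
    (hm2 : ∀ u u', M.Adj u u' → κ u ≠ u → κ u = κ u') {p : ℕ → V} (m : ℕ)
    (hp : AP G M p (2*m)) (h0 : κ (p 0) = p 0) :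
    Nn κ p (2*m) + (miss κ p (2*m)).card ≤ 0 ∧
    ((∀ i ≤ 2*m, κ (p i) = p 0) ∨ Nn κ p (2*m) + (miss κ p (2*m)).card ≤ -1 ∨
      κ (p (2*m)) ≠ p 0) := by
  induction m with
  | zero =>
    refine ⟨?_, Or.inl fun i hi => ?_⟩
    · have : miss κ p (2*0) = ∅ := by
        ext r
        simp only [mem_miss, Finset.notMem_empty, iff_false]
        rintro ⟨⟨i, hi, h1⟩, h2⟩
        obtain rfl : i = 0 := by omega
        exact h2 0 (by omega) (by rw [← h0, h1])
      rw [this]; simp [Nn]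
    · obtain rfl : i = 0 := by omega
      exact h0
  | succ m ih =>
    obtain ⟨ih1, ih2⟩ := ih (hp.take (by omega))
    set n := 2 * m with hn
    have hne : Even n := by simp [hn]
    rw [show 2 * (m+1) = n + 2 by omega] at hp ⊢
    have hma : M.Adj (p (n+1)) (p (n+2)) := hp.adj_odd (by omega) (by grind)
    have inj : ∀ i ≤ n, ∀ j, n < j → j ≤ n + 2 → p i ≠ p j := fun i hi j h1 h2 he => by
      have := hp.2 i (by omega) j h2 he
      omega
    have hle : ∀ i, i ≤ n + 2 → i ≤ n ∨ i = n+1 ∨ i = n+2 := by omega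
    have hN : Nn κ p (n+2) = Nn κ p n + (if κ (p n) = κ (p (n+1)) then 1 else 0)
        - (if κ (p (n+1)) = κ (p (n+2)) then 1 else 0) := by
      rw [Nn_succ, Nn_succ, hne.neg_one_pow, (by grind : Odd (n+1)).neg_one_pow]
      ring
    by_cases hrep : κ (p (n+1)) = p (n+1)
    · have hrep2 := hm1 _ _ hma hrep
      have hc2 : κ (p (n+1)) ≠ κ (p (n+2)) := by
        rw [hrep, hrep2]; exact (M.adj_sub hma).ne
      rw [if_neg hc2] at hN
      have hsub : miss κ p (n+2) ⊆ miss κ p n := by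
        intro r hr
        rw [mem_miss] at hr ⊢
        obtain ⟨⟨i, hi, h1⟩, h2⟩ := hr
        refine ⟨?_, fun i hi => h2 i (by omega)⟩
        rcases hle i hi with h | rfl | rfl
        · exact ⟨i, h, h1⟩
        · exact absurd (hrep.symm.trans h1) (h2 _ (by omega))
        · exact absurd (hrep2.symm.trans h1) (h2 _ (by omega))
      have hstep : Nn κ p (n+2) + (miss κ p (n+2)).card ≤ Nn κ p n + (miss κ p n).card := by
        by_cases hc1 : κ (p n) = κ (p (n+1))
        · have hin : p (n+1) ∈ miss κ p n := by
            rw [mem_miss]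
            exact ⟨⟨n, le_rfl, hc1.trans hrep⟩, fun i hi => inj i hi _ (by omega) (by omega)⟩
          have hout : p (n+1) ∉ miss κ p (n+2) := by
            rw [mem_miss]
            exact fun h => h.2 (n+1) (by omega) rfl
          have : (miss κ p (n+2)).card < (miss κ p n).card :=
            Finset.card_lt_card ⟨hsub, fun h => hout (h hin)⟩
          rw [hN, if_pos hc1]; omega
        · have := Finset.card_le_card hsub
          rw [hN, if_neg hc1]; omega
      refine ⟨by omega, Or.inr (Or.inr ?_)⟩
      rw [hrep2]
      exact (inj 0 (by omega) _ (by omega) (by omega)).symm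
    · have hc2 := hm2 _ _ hma hrep
      rw [if_pos hc2] at hN
      have hsub : miss κ p (n+2) ⊆ insert (κ (p (n+1))) (miss κ p n) := by
        intro r hr
        rw [Finset.mem_insert]
        rw [mem_miss] at hr ⊢
        obtain ⟨⟨i, hi, h1⟩, h2⟩ := hr
        rcases hle i hi with h | rfl | rfl
        · exact Or.inr ⟨⟨i, h, h1⟩, fun i hi => h2 i (by omega)⟩
        · exact Or.inl h1.symm
        · exact Or.inl (h1.symm.trans hc2.symm)
      by_cases hc1 : κ (p n) = κ (p (n+1))
      · have hsub' : miss κ p (n+2) ⊆ miss κ p n := by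
          intro r hr
          rcases Finset.mem_insert.mp (hsub hr) with h | h
          · rw [mem_miss] at hr ⊢
            exact ⟨⟨n, le_rfl, hc1.trans h.symm⟩, fun i hi => hr.2 i (by omega)⟩
          · exact h
        have hcard := Finset.card_le_card hsub'
        rw [if_pos hc1] at hN
        refine ⟨by omega, ?_⟩
        rcases ih2 with h | h | h
        · left
          intro i hi
          rcases hle i hi with h' | rfl | rfl
          · exact h i h'
          · rw [← hc1]; exact h n le_rfl
          · rw [← hc2, ← hc1]; exact h n le_rfl
        · right; left; omega
        · right; right
          rwa [← hc2, ← hc1]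
      · rw [if_neg hc1] at hN
        have hcard := (Finset.card_le_card hsub).trans (Finset.card_insert_le _ _)
        refine ⟨by omega, ?_⟩
        by_cases hk : κ (p (n+2)) = p 0
        · right; left
          have hsub' : miss κ p (n+2) ⊆ miss κ p n := by
            intro r hr
            rcases Finset.mem_insert.mp (hsub hr) with h | h
            · rw [mem_miss] at hr
              exact absurd (h.trans (hc2.trans hk)).symm (hr.2 0 (by omega))
            · exact h
          have hcard := Finset.card_le_card hsub'
          rcases ih2 with h | h | h <;> omega
        · exact Or.inr (Or.inr hk)

theorem count_le {κ : V → V} (hid : ∀ u, κ (κ u) = κ u)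
    (hm1 : ∀ u u', M.Adj u u' → κ u = u → κ u' = u')
    (hm2 : ∀ u u', M.Adj u u' → κ u ≠ u → κ u = κ u') {p : ℕ → V} {n : ℕ} (hn : Even n)
    (hp : AP G M p n) (h0 : κ (p 0) = p 0) :
    Nn κ p n ≤ 0 ∧ (Nn κ p n = 0 → ∀ j ≤ n, ∃ j' ≤ n, κ (p j) = p j') ∧
    (Nn κ p n = 0 → κ (p n) = p 0 → ∀ i ≤ n, κ (p i) = p 0) := by
  obtain ⟨m, rfl⟩ := even_iff_exists_two_mul.mp hn
  obtain ⟨h1, h2⟩ := count hid hm1 hm2 m hp h0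
  refine ⟨by omega, fun h j hj => ?_, fun h hk => ?_⟩
  · have : miss κ p (2*m) = ∅ := Finset.card_eq_zero.mp (by omega)
    by_contra hc
    push Not at hc
    have : κ (p j) ∈ miss κ p (2*m) := mem_miss.mpr ⟨⟨j, hj, rfl⟩, fun i hi => (hc i hi).symm⟩
    simp_all
  · rcases h2 with h2 | h2 | h2
    · exact h2
    · omega
    · exact absurd hk h2

theorem count_odd {κ : V → V} (hid : ∀ u, κ (κ u) = κ u)
    (hm1 : ∀ u u', M.Adj u u' → κ u = u → κ u' = u')
    (hm2 : ∀ u u', M.Adj u u' → κ u ≠ u → κ u = κ u') {p : ℕ → V} {n : ℕ} (hn : ¬ Even n)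
    (hp : AP G M p n) (h0 : κ (p 0) = p 0) :
    Nn κ p n ≤ 1 ∧ (κ (p n) = p n → Nn κ p n ≤ 0) ∧
    (1 ≤ Nn κ p n → κ (p n) = p 0 → ∀ i ≤ n, κ (p i) = p 0) := by
  obtain ⟨m, rfl⟩ := Nat.not_even_iff_odd.mp hn
  obtain ⟨h1, h2⟩ := count hid hm1 hm2 m (hp.take (by omega)) h0
  have hN := Nn_succ κ p (2*m)
  rw [(by simp : Even (2*m)).neg_one_pow] at hN
  by_cases hc : κ (p (2*m)) = κ (p (2*m+1))
  · rw [if_pos hc] at hN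
    refine ⟨by omega, fun hk => ?_, fun hg hk => ?_⟩
    · have : p (2*m+1) ∈ miss κ p (2*m) := by
        refine mem_miss.mpr ⟨⟨2*m, le_rfl, hc.trans hk⟩, fun i hi he => ?_⟩
        have := hp.2 i (by omega) _ le_rfl he
        omega
      have := Finset.card_pos.mpr ⟨_, this⟩
      omega
    · intro i hi
      rcases Nat.le_succ_iff.mp hi with h | rfl
      · rcases h2 with h2 | h2 | h2
        · exact h2 i h
        · omega
        · exact absurd (hc.trans hk) h2
      · exact hk
  · rw [if_neg hc] at hN
    exact ⟨by omega, fun _ => by omega, by omega⟩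

theorem sum_ind (τ k : ℕ) :
    ∑ s ∈ Finset.range k, (if τ ≤ s then (1:ℤ) else 0) = ((k - τ : ℕ) : ℤ) := by
  induction k with
  | zero => simp
  | succ k ih =>
    rw [Finset.sum_range_succ, ih]
    split_ifs <;> omega

def EL (G : SimpleGraph V) (M : G.Subgraph) (t : ℕ) (u : V) : Prop :=
  ∃ e : ℕ, evenlevel G M u = e ∧ (tenacity G M u ≤ t ∨ 2 * e ≤ t + 2)

def OL (G : SimpleGraph V) (M : G.Subgraph) (t : ℕ) (u : V) : Prop :=
  ∃ o : ℕ, oddlevel G M u = o ∧ 2 * o ≤ t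

noncomputable def yv (G : SimpleGraph V) (M : G.Subgraph) (t : ℕ) (u : V) : ℤ :=
  if EL G M t u then 2 * ((evenlevel G M u).toNat : ℤ) - (t + 1)
  else if OL G M t u then (t + 1 : ℤ) - 2 * ((oddlevel G M u).toNat : ℤ) else 1

theorem yv_EL {t : ℕ} {u : V} {e : ℕ} (he : evenlevel G M u = e)
    (h : tenacity G M u ≤ t ∨ 2 * e ≤ t + 2) : yv G M t u = 2 * (e:ℤ) - (t+1) := by
  have : EL G M t u := ⟨e, he, h⟩
  simp [yv, this, he]

theorem yv_OL {t : ℕ} {u : V} {o : ℕ} (h : ¬ EL G M t u) (he : oddlevel G M u = o)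
    (h2 : 2 * o ≤ t) : yv G M t u = (t+1:ℤ) - 2 * o := by
  have : OL G M t u := ⟨o, he, h2⟩
  simp [yv, this, he, h]

theorem yv_no {t : ℕ} {u : V} (h : ¬ EL G M t u) (h2 : ¬ OL G M t u) : yv G M t u = 1 := by
  simp [yv, h, h2]

def F1 (G : SimpleGraph V) (M : G.Subgraph) (bse : V → V) (s : ℕ) : Prop :=
  ∀ a z : V, ∀ α β : ℕ, G.Adj a z → ¬ M.Adj a z → evenlevel G M a = α → evenlevel G M z = β →
    α + β + 1 = s → Kf G M bse s a = Kf G M bse s z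

noncomputable def Cnt (G : SimpleGraph V) (M : G.Subgraph) (bse : V → V) (t : ℕ) (a z : V) : ℤ :=
  ∑ s ∈ Finset.range (t+1), (if Kf G M bse s a = Kf G M bse s z then 1 else 0)

theorem Cnt_nonneg (t : ℕ) (a z : V) : 0 ≤ Cnt G M bse t a z :=
  Finset.sum_nonneg fun s _ => by split_ifs <;> simp

theorem even_min {a : V} {α : ℕ} (h : evenlevel G M a = α) :
    ∃ x, IsMin G M x α ∧ x α = a ∧ Even α := by
  rw [← lev_even (k := 0) (by simp)] at h
  obtain ⟨x, n, h1, h2, h3, h4⟩ := exists_min (G := G) (M := M) (k := 0) (v := a) (by simp [h])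
  rw [h] at h4
  have : α = n := by exact_mod_cast h4
  subst this
  exact ⟨x, h1, h2, by simpa using h3⟩

theorem odd_min {a : V} {α : ℕ} (h : oddlevel G M a = α) :
    ∃ x, IsMin G M x α ∧ x α = a ∧ ¬ Even α := by
  rw [← lev_odd (k := 1) (by simp)] at h
  obtain ⟨x, n, h1, h2, h3, h4⟩ := exists_min (G := G) (M := M) (k := 1) (v := a) (by simp [h])
  rw [h] at h4
  have : α = n := by exact_mod_cast h4
  subst this
  exact ⟨x, h1, h2, by simpa using h3⟩

theorem enat_le_nat {a : ℕ∞} {n : ℕ} (h : a ≤ n) : ∃ m : ℕ, a = m ∧ m ≤ n := by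
  obtain ⟨m, hm⟩ := ENat.ne_top_iff_exists.mp (ne_top_of_le_ne_top (by simp) h)
  exact ⟨m, hm.symm, by rw [← hm] at h; exact_mod_cast h⟩

/-- neighbour of an even vertex -/
theorem nbr {a z : V} {α : ℕ} (ha : evenlevel G M a = α) (hadj : G.Adj a z) (hnm : ¬ M.Adj a z) :
    (∃ o : ℕ, oddlevel G M z = o ∧ o ≤ α + 1) ∨ (∃ e : ℕ, evenlevel G M z = e ∧ e ≤ α) := by
  obtain ⟨x, hx, hxe, hα⟩ := even_min ha
  by_cases hz : ∃ i ≤ α, x i = z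
  · obtain ⟨i, hi, hz⟩ := hz
    by_cases hie : Even i
    · right
      have := (hx.1.take hi).lev_le' (k := 0) hz (by simp [hie])
      rw [lev_even (by simp)] at this
      obtain ⟨m, h1, h2⟩ := enat_le_nat this
      exact ⟨m, h1, by omega⟩
    · left
      have := (hx.1.take hi).lev_le' (k := 1) hz (by simp [hie])
      rw [lev_odd (by simp)] at this
      obtain ⟨m, h1, h2⟩ := enat_le_nat this
      exact ⟨m, h1, by omega⟩
  · left
    push Not at hz
    obtain ⟨r, hr, hre, -⟩ := hx.1.extend (u := z) (hxe ▸ hadj)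
      (by rw [hxe]; simp [hnm, hα]) hz
    have := hr.lev_le' (k := 1) hre (by grind)
    rw [lev_odd (by simp)] at this
    exact enat_le_nat this

theorem edge_mixed {t : ℕ} {a z : V} (hadj : G.Adj a z) (hnm : ¬ M.Adj a z)
    (ha : EL G M t a) (hz : ¬ EL G M t z) : 0 ≤ yv G M t a + yv G M t z + 2 := by
  obtain ⟨α, h1, h2⟩ := ha
  rw [yv_EL h1 h2]
  have key := nbr h1 hadj hnm
  have hz' : ∀ e : ℕ, evenlevel G M z = e → t + 2 < 2 * e := by
    intro e he
    by_contra hc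
    exact hz ⟨e, he, Or.inr (by omega)⟩
  by_cases ho : OL G M t z
  · obtain ⟨o, h3, h4⟩ := ho
    rw [yv_OL hz h3 h4]
    rcases key with ⟨o', h5, h6⟩ | ⟨e, h5, h6⟩
    · rw [h3] at h5
      have : o = o' := by exact_mod_cast h5
      omega
    · have := hz' e h5
      omega
  · rw [yv_no hz ho]
    rcases key with ⟨o, h5, h6⟩ | ⟨e, h5, h6⟩
    · have : t < 2 * o := by
        by_contra hc
        exact ho ⟨o, h5, by omega⟩
      omega
    · have := hz' e h5
      omega

theorem yv_pos {t : ℕ} {u : V} (h : ¬ EL G M t u) : 1 ≤ yv G M t u := by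
  by_cases ho : OL G M t u
  · obtain ⟨o, h3, h4⟩ := ho
    rw [yv_OL h h3 h4]; omega
  · rw [yv_no h ho]

theorem edge_unmatched {t : ℕ} (hF : ∀ s ≤ t, F1 G M bse s) {a z : V} (hadj : G.Adj a z)
    (hnm : ¬ M.Adj a z) : 0 ≤ yv G M t a + yv G M t z + 2 + 2 * Cnt G M bse t a z := by
  have hC := Cnt_nonneg (G := G) (M := M) (bse := bse) t a z
  by_cases ha : EL G M t a <;> by_cases hz : EL G M t z
  · obtain ⟨α, h1, h2⟩ := ha
    obtain ⟨β, h3, h4⟩ := hz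
    rw [yv_EL h1 h2, yv_EL h3 h4]
    by_cases hτ : α + β + 1 ≤ t
    · have : ((t + 1 - (α + β + 1) : ℕ) : ℤ) ≤ Cnt G M bse t a z := by
        rw [← sum_ind]
        apply Finset.sum_le_sum
        intro s hs
        by_cases h : α + β + 1 ≤ s
        · rw [if_pos h, if_pos (K_mono h (hF _ hτ a z α β hadj hnm h1 h3 rfl))]
        · rw [if_neg h]; split_ifs <;> simp
      omega
    · omega
  · have := edge_mixed hadj hnm ha hz
    omega
  · have := edge_mixed hadj.symm (fun h => hnm h.symm) hz ha
    omega
  · have := yv_pos ha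
    have := yv_pos hz
    omega

theorem ten_le_nat {t : ℕ} {u : V} (h : tenacity G M u ≤ t) : ∃ e o : ℕ, Even e ∧ ¬ Even o ∧
    evenlevel G M u = e ∧ oddlevel G M u = o ∧ tenacity G M u = ((e + o : ℕ) : ℕ∞) ∧ e + o ≤ t := by
  obtain ⟨e, o, h1, h2, h3, h4, h5⟩ := ten_nat (ne_top_of_le_ne_top (by simp) h)
  exact ⟨e, o, h1, h2, h3, h4, h5, by rw [h5] at h; exact_mod_cast h⟩

theorem edge_matched (hM : M.IsMatching) (hb : BaseFn G M bse) {t : ℕ} (ht : (t:ℕ∞) < lm G M)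
    {u u' : V} (hu : M.Adj u u') :
    yv G M t u + yv G M t u' - 2 + 2 * Cnt G M bse t u u' ≤ 0 := by
  rcases le_or_gt (tenacity G M u) t with h | h
  · obtain ⟨e, o, h1, h2, h3, h4, h5, h6⟩ := ten_le_nat h
    have h7 : evenlevel G M u' = ((o + 1 : ℕ) : ℕ∞) := by
      rw [mate_lev hM hu.symm, h4]; rfl
    rw [yv_EL h3 (Or.inl h), yv_EL h7 (Or.inl (mate_ten hM hu ▸ h))]
    have : Cnt G M bse t u u' ≤ ((t + 1 - (e + o) : ℕ) : ℤ) := by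
      rw [← sum_ind]
      apply Finset.sum_le_sum
      intro s hs
      by_cases h : e + o ≤ s
      · rw [if_pos h]; split_ifs <;> simp
      · have hs : (s : ℕ∞) < tenacity G M u := by
          rw [h5]; exact_mod_cast (by omega : s < e + o)
        rw [if_neg h, K_high hs, K_high (mate_ten hM hu ▸ hs), if_neg (M.adj_sub hu).ne]
    omega
  · have hC : Cnt G M bse t u u' = 0 := by
      apply Finset.sum_eq_zero
      intro s hs
      have hs : (s : ℕ∞) < tenacity G M u :=
        lt_of_le_of_lt (by exact_mod_cast (by simpa [Nat.lt_succ_iff] using hs : s ≤ t)) h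
      rw [K_high hs, K_high (mate_ten hM hu ▸ hs), if_neg (M.adj_sub hu).ne]
    rw [hC]
    have key : ∀ {v v' : V}, M.Adj v v' → (t:ℕ∞) < tenacity G M v →
        yv G M t v ≤ 1 ∨ yv G M t v + yv G M t v' = 2 := by
      intro v v' hv hh
      by_cases he : EL G M t v
      · obtain ⟨e, h1, h2⟩ := he
        left
        rw [yv_EL h1 h2]
        rcases h2 with h2 | h2
        · exact absurd hh (not_lt.mpr h2)
        · omega
      · by_cases ho : OL G M t v
        · obtain ⟨o, h1, h2⟩ := ho
          right
          have h7 : evenlevel G M v' = ((o + 1 : ℕ) : ℕ∞) := by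
            rw [mate_lev hM hv.symm, h1]; rfl
          rw [yv_OL he h1 h2, yv_EL h7 (Or.inr (by omega))]
          push_cast; ring
        · left; rw [yv_no he ho]
    rcases key hu h with k1 | k1 <;> rcases key hu.symm (mate_ten hM hu ▸ h) with k2 | k2 <;> omega

theorem dual (hM : M.IsMatching) (hb : BaseFn G M bse) {t : ℕ} (ht : (t:ℕ∞) < lm G M)
    (hF : ∀ s ≤ t, F1 G M bse s) {p : ℕ → V} {n : ℕ} (hp : AP G M p n) :
    0 ≤ yv G M t (p 0) - (-1)^n * yv G M t (p n) + 2 * n +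
      2 * ∑ s ∈ Finset.range (t+1), Nn (Kf G M bse s) p n := by
  induction n with
  | zero => simp [Nn]
  | succ n ih =>
    have ih := ih (hp.take (by omega))
    have hs : ∑ s ∈ Finset.range (t+1), Nn (Kf G M bse s) p (n+1) =
        ∑ s ∈ Finset.range (t+1), Nn (Kf G M bse s) p n +
          (-1)^n * Cnt G M bse t (p n) (p (n+1)) := by
      simp only [Nn_succ, Finset.sum_add_distrib, Cnt, Finset.mul_sum]
    rw [hs]
    have hh := hp.1 n (by omega)
    by_cases hn : Even n
    · have := edge_unmatched hF hh.1 (by rw [hh.2]; simpa using hn)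
      rw [hn.neg_one_pow] at *
      rw [pow_succ, hn.neg_one_pow]
      push_cast
      linarith
    · have hn' := Nat.not_even_iff_odd.mp hn
      have := edge_matched hM hb ht (hh.2.2 hn')
      rw [hn'.neg_one_pow] at *
      rw [pow_succ, hn'.neg_one_pow]
      push_cast
      linarith

theorem K_m1 (hM : M.IsMatching) (hb : BaseFn G M bse) {s : ℕ} (hs : (s:ℕ∞) < lm G M) :
    ∀ u u', M.Adj u u' → Kf G M bse s u = u → Kf G M bse s u' = u' := by
  intro u u' h hk
  rw [K_rep hM hb hs] at hk
  exact K_high (mate_ten hM h ▸ hk)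

theorem K_m2 (hM : M.IsMatching) (hb : BaseFn G M bse) {s : ℕ} (hs : (s:ℕ∞) < lm G M) :
    ∀ u u', M.Adj u u' → Kf G M bse s u ≠ u → Kf G M bse s u = Kf G M bse s u' := by
  intro u u' h hk
  exact K_mates hM hb hs h (not_lt.mp fun hc => hk (K_high hc))

theorem JJ (hM : M.IsMatching) (hb : BaseFn G M bse) {t : ℕ} (ht : (t:ℕ∞) < lm G M)
    (hF : ∀ s ≤ t, F1 G M bse s) {p : ℕ → V} {n e0 : ℕ} (hp : AP G M p n)
    (hl : tenacity G M (p n) ≤ t) (h0 : p 0 = Kf G M bse t (p n))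
    (he0 : evenlevel G M (p 0) = e0) (hle : ((n + e0 : ℕ) : ℕ∞) ≤ lev G M n (p n)) :
    ∀ j ≤ n, Kf G M bse t (p j) = p 0 := by
  obtain ⟨e, o, h1, h2, h3, h4, h5, h6⟩ := ten_le_nat hl
  obtain ⟨m, -, g1, g2, g3⟩ := K_low hM hb ht h3 h4 h6
  rw [← h0, he0] at g1
  have : e0 = m := by exact_mod_cast g1
  subst this
  have hD := dual hM hb ht hF hp
  rw [yv_EL he0 (Or.inr (by omega)), yv_EL h3 (Or.inl hl)] at hD
  have hslm : ∀ s ≤ t, (s:ℕ∞) < lm G M := fun s hs => lt_of_le_of_lt (by exact_mod_cast hs) ht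
  have hrep : ∀ s ≤ t, Kf G M bse s (p 0) = p 0 := fun s hs => by
    apply K_high
    rw [h0]
    exact lt_of_le_of_lt (by exact_mod_cast hs) (K_gt hM hb ht _)
  by_cases hn : Even n
  · have hc := fun s (hs : s ≤ t) => count_le (K_idem hM hb (hslm s hs)) (K_m1 hM hb (hslm s hs))
      (K_m2 hM hb (hslm s hs)) hn hp (hrep s hs)
    rw [lev_even hn, h3] at hle
    have hle : n + e0 ≤ e := by exact_mod_cast hle
    rw [hn.neg_one_pow, Finset.sum_range_succ] at hD
    have hS : ∑ s ∈ Finset.range t, Nn (Kf G M bse s) p n ≤ 0 :=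
      Finset.sum_nonpos fun s hs => (hc s (by simp at hs; omega)).1
    have := (hc t le_rfl).1
    exact (hc t le_rfl).2.2 (by omega) h0.symm
  · have hc := fun s (hs : s ≤ t) => count_odd (K_idem hM hb (hslm s hs)) (K_m1 hM hb (hslm s hs))
      (K_m2 hM hb (hslm s hs)) hn hp (hrep s hs)
    rw [lev_odd hn, h4] at hle
    have hle : n + e0 ≤ o := by exact_mod_cast hle
    rw [(Nat.not_even_iff_odd.mp hn).neg_one_pow, Finset.sum_range_succ] at hD
    have hS : ∑ s ∈ Finset.range t, Nn (Kf G M bse s) p n ≤ ((t - (e + o) : ℕ) : ℤ) := by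
      rw [← sum_ind]
      apply Finset.sum_le_sum
      intro s hs
      have hs : s < t := by simpa using hs
      by_cases h : e + o ≤ s
      · rw [if_pos h]; exact (hc s hs.le).1
      · rw [if_neg h]
        refine (hc s hs.le).2.1 (K_high ?_)
        rw [h5]; exact_mod_cast (by omega : s < e + o)
    exact (hc t le_rfl).2.2 (by omega) h0.symm

theorem Jt (hM : M.IsMatching) (hb : BaseFn G M bse) {t : ℕ} (ht : (t:ℕ∞) < lm G M)
    (hF : ∀ s ≤ t, F1 G M bse s) {x : ℕ → V} {n : ℕ} (hx : IsMin G M x n) :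
    ∃ i ≤ n, x i = Kf G M bse t (x n) ∧ IsMin G M x i ∧ (i < n → Even i) ∧
      ∀ j, i ≤ j → j ≤ n → Kf G M bse t (x j) = Kf G M bse t (x n) := by
  obtain ⟨i, hi, h1, h2, h3, h4, h5⟩ := K_path hM hb ht hx
  refine ⟨i, hi, h1, h4, h5, ?_⟩
  rcases hi.eq_or_lt with rfl | hin
  · intro j h6 h7
    obtain rfl : j = i := by omega
    rfl
  · have he := h5 hin
    have := JJ hM hb ht hF (hx.1.1.drop hi he) (e0 := i)
      (by simpa [show i + (n - i) = n by omega] using h3 n hin le_rfl)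
      (by simpa [show i + (n - i) = n by omega] using h1)
      (by have := h4.2; rw [lev_even he] at this; simpa using this)
      (by
        simp only [show i + (n - i) = n by omega]
        rw [lev_congr (l := n) (by grind), hx.2]
        exact_mod_cast (by omega : n - i + i ≤ n))
    intro j h6 h7
    have := this (j - i) (by omega)
    simp only [show i + (j - i) = j by omega, add_zero] at this
    rw [this, h1]

theorem Pt (hM : M.IsMatching) (hb : BaseFn G M bse) {t : ℕ} (ht : (t:ℕ∞) < lm G M)
    (hF : ∀ s ≤ t, F1 G M bse s) {x : ℕ → V} {n : ℕ} (hx : IsMin G M x n) (hn : Even n)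
    (h2n : 2 * n ≤ t + 2) :
    ∀ j ≤ n, ∃ j' ≤ n, Kf G M bse t (x j) = x j' := by
  have hD := dual hM hb ht hF hx.1.1
  have h0 := free_even hx.1.2
  have hxn := hx.2
  rw [lev_even hn] at hxn
  rw [yv_EL (e := 0) (by simpa using h0) (Or.inr (by omega)), yv_EL hxn (Or.inr h2n),
    hn.neg_one_pow, Finset.sum_range_succ] at hD
  have hslm : ∀ s ≤ t, (s:ℕ∞) < lm G M := fun s hs => lt_of_le_of_lt (by exact_mod_cast hs) ht
  have hrep : ∀ s ≤ t, Kf G M bse s (x 0) = x 0 := fun s hs =>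
    K_high (lt_of_lt_of_le (hslm s hs) (free_ten hx.1.2))
  have hc := fun s (hs : s ≤ t) => count_le (K_idem hM hb (hslm s hs)) (K_m1 hM hb (hslm s hs))
      (K_m2 hM hb (hslm s hs)) hn hx.1.1 (hrep s hs)
  have hS : ∑ s ∈ Finset.range t, Nn (Kf G M bse s) x n ≤ 0 :=
      Finset.sum_nonpos fun s hs => (hc s (by simp at hs; omega)).1
  have := (hc t le_rfl).1
  exact (hc t le_rfl).2.1 (by push_cast at hD; omega)

theorem IsMin.ev {x : ℕ → V} {n : ℕ} (h : IsMin G M x n) (hn : Even n) :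
    evenlevel G M (x n) = n := by
  rw [← lev_even hn, h.2]

theorem SL (hM : M.IsMatching) (hb : BaseFn G M bse) {t : ℕ} (ht : ((t+1:ℕ):ℕ∞) < lm G M)
    (hF : ∀ s ≤ t, F1 G M bse s) {x x2 : ℕ → V} {α β : ℕ}
    (hx : IsMin G M x α) (hx2 : IsMin G M x2 β) (hα : Even α) (hβ : Even β)
    (hadj : G.Adj (x α) (x2 β)) (hnm : ¬ M.Adj (x α) (x2 β)) (hs : α + β = t)
    (hd : ∀ e : ℕ, evenlevel G M (Kf G M bse t (x α)) = e → 2 * e ≤ t + 2)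
    (hne : Kf G M bse t (x α) ≠ Kf G M bse t (x2 β))
    (hc : ∀ l ≤ α, x l ≠ Kf G M bse t (x2 β)) :
    Kf G M bse (t+1) (x α) = Kf G M bse (t+1) (x2 β) := by
  have ht' : (t:ℕ∞) < lm G M := lt_trans (by exact_mod_cast Nat.lt_succ_self t) ht
  obtain ⟨i, hi, h1, h2, h3, h4⟩ := Jt hM hb ht' hF hx2
  obtain ⟨k, hk, g1, g2, g3, g4⟩ := Jt hM hb ht' hF hx
  have hie : Even i := by
    rcases hi.eq_or_lt with h | h
    · rw [h]; exact hβ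
    · exact h3 h
  have hke : Even k := by
    rcases hk.eq_or_lt with h | h
    · rw [h]; exact hα
    · exact g3 h
  have h2k : 2 * k ≤ t + 2 := hd k (by rw [← g1]; exact g2.ev hke)
  have avoid : ∀ l ≤ α, ∀ j, i ≤ j → j ≤ β → x l ≠ x2 j := by
    intro l hl j hj1 hj2 he
    have e1 := h4 j hj1 hj2
    rw [← he] at e1
    rcases le_or_gt k l with h | h
    · rw [g4 l h hl] at e1; exact hne e1
    · obtain ⟨j', hj', e2⟩ := Pt hM hb ht' hF g2 hke h2k l h.le
      exact hc j' (by omega) (e2.symm.trans e1)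
  obtain ⟨r1, hr1, hr1e, hr1a⟩ := hx.1.extend hadj (by simp [hnm, hα])
    (fun l hl => avoid l hl β hi le_rfl)
  obtain ⟨r, hr, hre, hra, hrb⟩ := splice_opp (k := i) hr1 hx2.1.1 le_rfl hi hr1e
    (by grind) (fun i' hi' j' a b => by
      rw [hr1a i' (by omega)]; exact avoid i' (by omega) j' a b)
  set L := α + 1 + (β - i) with hL
  have hLo : ¬ Even L := by grind
  have hevc := h2.ev hie
  have hodc : oddlevel G M (x2 i) ≤ L := by
    rw [← lev_odd (k := L) hLo]; exact hr.lev_le' hre Iff.rfl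
  obtain ⟨o, ho1, ho2⟩ := enat_le_nat hodc
  have htc : tenacity G M (x2 i) = ((i + o : ℕ) : ℕ∞) := by
    unfold tenacity; rw [hevc, ho1]; rfl
  have hgt := K_gt hM hb ht' (x2 β)
  rw [← h1, htc] at hgt
  have hgt : t < i + o := by exact_mod_cast hgt
  have hoL : o = L := by omega
  have hmin : IsMin G M r L := ⟨hr, by rw [hre, lev_odd hLo, ho1, hoL]⟩
  have hra' : r α = x α := by rw [hra α (by omega), hr1a α le_rfl]
  have hminα : IsMin G M r α := ⟨hr.take (by omega), by rw [hra', hx.2]⟩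
  have key := K_last hM hb ht hmin hminα (by omega) (by
    intro j hj1 hj2
    have := hrb (β - (j - (α + 1))) (by omega) (by omega)
    rw [show α + 1 + (β - (β - (j - (α + 1)))) = j by omega] at this
    rw [this]
    set l := β - (j - (α+1))
    rcases (show i ≤ l by omega).eq_or_lt with h | h
    · rw [← h, htc]; exact_mod_cast (by omega : i + o ≤ t + 1)
    · by_contra hcon
      push Not at hcon
      have e3 : Kf G M bse t (x2 l) = x2 l :=
        K_high (lt_trans (by exact_mod_cast Nat.lt_succ_self t) hcon)
      rw [h4 l h.le (by omega), ← h1] at e3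
      have := hx2.1.1.2 _ hi _ (by omega) e3
      omega)
  rw [hra', hre, h1, K_comp hM hb ht' (Nat.le_succ t)] at key
  exact key

theorem SL2 (hM : M.IsMatching) (hb : BaseFn G M bse) {t : ℕ} (ht : (t:ℕ∞) < lm G M)
    (hF : ∀ s ≤ t, F1 G M bse s) {x : ℕ → V} {α β l i : ℕ} {c : V}
    (hx : IsMin G M x α) (hα : Even α) (hs : α + β = t) (hta : tenacity G M (x α) ≤ ((t+1:ℕ):ℕ∞))
    (hcne : c ≠ Kf G M bse t (x α)) (hct : (t:ℕ∞) < tenacity G M c) (hl : l ≤ α) (hxl : x l = c)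
    (hci : evenlevel G M c = i) (hiβ : i ≤ β) :
    evenlevel G M c < evenlevel G M (Kf G M bse t (x α)) := by
  obtain ⟨k, hk, g1, g2, g3, g4⟩ := Jt hM hb ht hF hx
  have hke : Even k := by
    rcases hk.eq_or_lt with h | h
    · rw [h]; exact hα
    · exact g3 h
  have hmin : IsMin G M x l := by
    refine honest hx hl (ne_top_of_le_ne_top (by simp) hta) (hta.trans ?_)
    rw [hxl]
    exact_mod_cast Order.add_one_le_of_lt hct
  have hle : Even l := by
    by_contra ho
    have := hmin.2
    rw [lev_odd ho, hxl] at this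
    have hlt : l ≠ α := by rintro rfl; exact ho hα
    unfold tenacity at hct
    rw [this, hci] at hct
    have : t < i + l := by exact_mod_cast hct
    omega
  have hlk : l < k := by
    by_contra hc
    push Not at hc
    have := g4 l hc hl
    rw [hxl, K_high hct] at this
    exact hcne this
  rw [← hxl, ← g1, hmin.ev hle, g2.ev hke]
  exact_mod_cast hlk

theorem F1_aux (hM : M.IsMatching) (hb : BaseFn G M bse) {t : ℕ} (ht : ((t+1:ℕ):ℕ∞) < lm G M)
    (hF : ∀ s ≤ t, F1 G M bse s) {a z : V} {α β : ℕ} (hadj : G.Adj a z) (hnm : ¬ M.Adj a z)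
    (ha : evenlevel G M a = α) (hz : evenlevel G M z = β) (hs : α + β = t) (hab : α ≤ β) :
    Kf G M bse (t+1) a = Kf G M bse (t+1) z := by
  have ht' : (t:ℕ∞) < lm G M := lt_trans (by exact_mod_cast Nat.lt_succ_self t) ht
  obtain ⟨x, hx, hxe, hα⟩ := even_min ha
  obtain ⟨x2, hx2, hx2e, hβ⟩ := even_min hz
  -- the odd level of z
  have hzo : (∃ o : ℕ, oddlevel G M z = o ∧ o + 1 ≤ α) ∨
      (∀ i ≤ α, x i ≠ z) := by
    by_cases hzx : ∃ i ≤ α, x i = z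
    · obtain ⟨i, hi, hzi⟩ := hzx
      have hia : i ≠ α := by
        rintro rfl
        exact hadj.ne (hxe.symm.trans hzi)
      by_cases hie : Even i
      · have := (hx.1.take hi).lev_le' (k := 0) hzi (by simp [hie])
        rw [lev_even (by simp), hz] at this
        have : β ≤ i := by exact_mod_cast this
        omega
      · have := (hx.1.take hi).lev_le' (k := 1) hzi (by simp [hie])
        rw [lev_odd (by simp)] at this
        obtain ⟨m, h1, h2⟩ := enat_le_nat this
        exact Or.inl ⟨m, h1, by omega⟩
    · right; push Not at hzx; exact hzx
  have hzo2 : (∃ o : ℕ, oddlevel G M z = o ∧ o + 1 ≤ α) ∨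
      Kf G M bse (t+1) a = Kf G M bse (t+1) z := by
    rcases hzo with h | h
    · exact Or.inl h
    obtain ⟨r, hr, hre, hra⟩ := hx.1.extend (u := z) (hxe ▸ hadj) (by rw [hxe]; simp [hnm, hα]) h
    have hαo : ¬ Even (α + 1) := by grind
    have h1 := hr.lev_le' hre Iff.rfl
    rw [lev_odd hαo] at h1
    obtain ⟨o, ho1, ho2⟩ := enat_le_nat h1
    have hpar : ¬ Even o := by
      have := lev_parity (G := G) (M := M) (v := z) (k := 1) (n := o) (by rw [lev_odd (by simp), ho1])
      simp [this]
    by_cases hoα : o = α + 1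
    · right
      have hmin : IsMin G M r (α+1) := ⟨hr, by rw [hre, lev_odd hαo, ho1, hoα]⟩
      have hra' : r α = a := by rw [hra α le_rfl, hxe]
      have hminα : IsMin G M r α := ⟨hr.take (by omega), by rw [hra', ← hxe, hx.2]⟩
      have := K_last hM hb ht hmin hminα (by omega) (by
        intro j hj1 hj2
        obtain rfl : j = α + 1 := by omega
        rw [hre]; unfold tenacity; rw [hz, ho1]
        exact_mod_cast (by omega : β + o ≤ t + 1))
      rwa [hra', hre] at this
    · left
      exact ⟨o, ho1, by grind⟩
  rcases hzo2 with ⟨o, ho1, ho2⟩ | h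
  swap
  · exact h
  have htz : tenacity G M z = ((β + o : ℕ) : ℕ∞) := by
    unfold tenacity; rw [hz, ho1]; rfl
  have htz1 : tenacity G M z ≤ t := by rw [htz]; exact_mod_cast (by omega : β + o ≤ t)
  have htz2 : tenacity G M z ≤ ((t+1:ℕ):ℕ∞) := htz1.trans (by exact_mod_cast Nat.le_succ t)
  rcases lt_or_ge ((t+1:ℕ):ℕ∞) (tenacity G M a) with hta | hta
  · exfalso
    have hoda : ∀ m : ℕ, m ≤ β + 1 → oddlevel G M a ≤ m → False := by
      intro m hm h
      have : tenacity G M a ≤ ((t+1:ℕ):ℕ∞) := by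
        unfold tenacity; rw [ha]
        calc (α:ℕ∞) + oddlevel G M a ≤ α + m := by gcongr
          _ ≤ _ := by exact_mod_cast (by omega : α + m ≤ t + 1)
      exact absurd hta (not_lt.mpr this)
    by_cases hax : ∃ j ≤ β, x2 j = a
    · obtain ⟨j, hj, hja⟩ := hax
      by_cases hje : Even j
      · have h1 := (hx2.1.take hj).lev_le' (k := 0) hja (by simp [hje])
        rw [lev_even (by simp), ha] at h1
        have h1 : α ≤ j := by exact_mod_cast h1
        obtain ⟨i, hi, e1, e2, e3, e4, e5⟩ := K_path hM hb ht hx2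
        have hji : j ≤ i := by
          by_contra hc
          push Not at hc
          have := e3 j hc hj
          rw [hja] at this
          exact absurd hta (not_lt.mpr this)
        have hiβ : i < β := by
          rcases hi.eq_or_lt with h | h
          · rw [h, hx2e] at e2; exact absurd e2 (not_lt.mpr htz2)
          · exact h
        obtain ⟨m, f1, f2, f3, f4⟩ := K_low hM hb ht hz ho1 (by omega : β + o ≤ t + 1)
        rw [← hx2e, ← e1, e4.ev (e5 hiβ)] at f2
        have : i = m := by exact_mod_cast f2
        omega
      · have h1 := (hx2.1.take hj).lev_le' (k := 1) hja (by simp [hje])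
        rw [lev_odd (by simp)] at h1
        exact hoda j (by omega) h1
    · push Not at hax
      obtain ⟨r, hr, hre, hra⟩ := hx2.1.extend (u := a) (hx2e ▸ hadj.symm)
        (by rw [hx2e]; simp only [hβ, M.adj_comm z a, hnm, false_iff]; simpa using hβ) hax
      have h1 := hr.lev_le' (k := 1) hre (by grind)
      rw [lev_odd (by simp)] at h1
      exact hoda _ le_rfl h1
  · by_cases heq : Kf G M bse t a = Kf G M bse t z
    · exact K_mono (Nat.le_succ t) heq
    have hc2 : ∀ e : ℕ, evenlevel G M (Kf G M bse t z) = e → 2 * e ≤ t + 2 := by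
      intro e he
      obtain ⟨m, f1, f2, f3, f4⟩ := K_low hM hb ht' hz ho1 (by omega : β + o ≤ t)
      rw [he] at f2
      have : e = m := by exact_mod_cast f2
      omega
    have hd2 : ∀ e : ℕ, evenlevel G M (Kf G M bse t a) = e → 2 * e ≤ t + 2 := by
      intro e he
      rcases lt_or_ge (t:ℕ∞) (tenacity G M a) with h | h
      · rw [K_high h, ha] at he
        have : α = e := by exact_mod_cast he
        omega
      · obtain ⟨e', o', -, -, f1, f2, -, f3⟩ := ten_le_nat h
        obtain ⟨m, q1, q2, q3, q4⟩ := K_low hM hb ht' f1 f2 f3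
        rw [he] at q2
        have : e = m := by exact_mod_cast q2
        omega
    have hevc : ∃ i : ℕ, evenlevel G M (Kf G M bse t z) = i ∧ i ≤ β := by
      obtain ⟨i, hi, h1, h2, h3, h4⟩ := Jt hM hb ht' hF hx2
      have hie : Even i := by
        rcases hi.eq_or_lt with h | h
        · rw [h]; exact hβ
        · exact h3 h
      exact ⟨i, by rw [← hx2e, ← h1, h2.ev hie], hi⟩
    have hevd : ∃ i : ℕ, evenlevel G M (Kf G M bse t a) = i ∧ i ≤ α := by
      obtain ⟨i, hi, h1, h2, h3, h4⟩ := Jt hM hb ht' hF hx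
      have hie : Even i := by
        rcases hi.eq_or_lt with h | h
        · rw [h]; exact hα
        · exact h3 h
      exact ⟨i, by rw [← hxe, ← h1, h2.ev hie], hi⟩
    by_cases hcx : ∃ l ≤ α, x l = Kf G M bse t z
    · by_cases hdx : ∃ l ≤ β, x2 l = Kf G M bse t a
      · exfalso
        obtain ⟨l, hl, hxl⟩ := hcx
        obtain ⟨m, hm, hxm⟩ := hdx
        obtain ⟨i, hi1, hi2⟩ := hevc
        obtain ⟨k, hk1, hk2⟩ := hevd
        have a1 := SL2 hM hb ht' hF hx hα hs (by rw [hxe]; exact hta)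
          (by rw [hxe]; exact Ne.symm heq) (K_gt hM hb ht' z) hl hxl hi1 hi2
        have a2 := SL2 hM hb ht' hF hx2 hβ (by omega : β + α = t) (by rw [hx2e]; exact htz2)
          (by rw [hx2e]; exact heq) (K_gt hM hb ht' a) hm hxm hk1 hk2
        rw [hxe] at a1
        rw [hx2e] at a2
        exact lt_asymm a1 a2
      · push Not at hdx
        have := SL hM hb ht hF hx2 hx hβ hα (by rw [hxe, hx2e]; exact hadj.symm)
          (by rw [hxe, hx2e]; exact fun h => hnm h.symm) (by omega) (by rw [hx2e]; exact hc2)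
          (by rw [hxe, hx2e]; exact Ne.symm heq) (by rw [hxe]; exact hdx)
        rw [hxe, hx2e] at this
        exact this.symm
    · push Not at hcx
      have := SL hM hb ht hF hx hx2 hα hβ (by rw [hxe, hx2e]; exact hadj)
          (by rw [hxe, hx2e]; exact hnm) (by omega) (by rw [hxe]; exact hd2)
          (by rw [hxe, hx2e]; exact heq) (by rw [hx2e]; exact hcx)
      rwa [hxe, hx2e] at this

theorem F1_all (hM : M.IsMatching) (hb : BaseFn G M bse) (t : ℕ) (ht : (t:ℕ∞) < lm G M) :
    ∀ s ≤ t, F1 G M bse s := by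
  induction t with
  | zero =>
    intro s hs a z α β _ _ _ _ h
    omega
  | succ t ih =>
    have ht' : (t:ℕ∞) < lm G M := lt_trans (by exact_mod_cast Nat.lt_succ_self t) ht
    have ih := ih ht'
    intro s hs
    rcases Nat.le_succ_iff.mp hs with h | rfl
    · exact ih s h
    · intro a z α β hadj hnm ha hz h
      rcases le_total α β with hab | hab
      · exact F1_aux hM hb ht ih hadj hnm ha hz (by omega) hab
      · exact (F1_aux hM hb ht ih hadj.symm (fun h => hnm h.symm) hz ha (by omega) hab).symm

theorem mem_blossom (hM : M.IsMatching) (hb : BaseFn G M bse) (k : ℕ)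
    (ht : ((2*k+1:ℕ):ℕ∞) < lm G M) (u : V) (hu : tenacity G M u ≤ ((2*k+1:ℕ):ℕ∞)) :
    u ∈ blossom G M bse (2*k+1) (Kf G M bse (2*k+1) u) := by
  induction k generalizing u with
  | zero =>
    exfalso
    obtain ⟨e, o, h1, h2, h3, h4, h5, h6⟩ := ten_le_nat hu
    have ho : o ≠ 0 := by rintro rfl; simp at h2
    have he : e = 0 := by omega
    rw [he] at h3
    have := free_ten (even_free (by simpa using h3))
    exact absurd (lt_of_lt_of_le ht this) (not_lt.mpr hu)
  | succ k ih =>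
    have hlt : ∀ s ≤ 2*k+3, (s:ℕ∞) < lm G M := fun s hs =>
      lt_of_le_of_lt (by exact_mod_cast hs) ht
    rw [show 2*(k+1)+1 = 2*k+1+2 by ring] at *
    set c := Kf G M bse (2*k+1) u with hc
    have hgt := K_gt hM hb (hlt (2*k+1) (by omega)) u
    rw [← hc] at hgt
    have hK1 : Kf G M bse (2*k+1+1) u = c := by
      change (if tenacity G M c = ((2*k+1+1:ℕ):ℕ∞) then bse c else c) = c
      rw [if_neg]
      intro h
      exact ten_odd h (by grind)
    have hK2 : Kf G M bse (2*k+1+2) u =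
        if tenacity G M c = ((2*k+1+2:ℕ):ℕ∞) then bse c else c := by
      rw [← hK1]; rfl
    -- either u is low, or u = c
    have hcase : (u = c) ∨ (u ∈ blossom G M bse (2*k+1) c ∧ Outer G M c) := by
      rcases lt_or_ge ((2*k+1:ℕ):ℕ∞) (tenacity G M u) with h | h
      · left; rw [hc, K_high h]
      · right
        refine ⟨ih (hlt _ (by omega)) u h, ?_⟩
        obtain ⟨e, o, h1, h2, h3, h4, h5, h6⟩ := ten_le_nat h
        obtain ⟨m, q1, q2, q3, q4⟩ := K_low hM hb (hlt (2*k+1) (by omega)) h3 h4 h6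
        rw [← hc] at q2
        unfold Outer
        rw [q2]
        by_contra hcon
        push Not at hcon
        obtain ⟨o', p1, p2⟩ := enat_le_nat hcon
        unfold tenacity at hgt
        rw [q2, p1] at hgt
        have : 2*k+1 < m + o' := by exact_mod_cast hgt
        omega
    by_cases hten : tenacity G M c = ((2*k+1+2:ℕ):ℕ∞)
    · rw [hK2, if_pos hten]
      rcases hcase with h | ⟨h, ho⟩
      · rw [h, blossom]
        exact Or.inl ⟨hten, rfl⟩
      · rw [blossom]
        refine Or.inr ?_
        simp only [Set.mem_iUnion]
        exact ⟨c, ⟨Or.inr ⟨hten, rfl⟩, ho⟩, h⟩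
    · rw [hK2, if_neg hten]
      rcases hcase with h | ⟨h, ho⟩
      · exfalso
        have h2 : tenacity G M c ≠ ((2*k+1+1:ℕ):ℕ∞) := fun h => ten_odd h (by grind)
        have := enat_succ_lt (enat_succ_lt hgt h2) hten
        rw [← h] at this
        exact absurd this (not_lt.mpr hu)
      · rw [blossom]
        refine Or.inr ?_
        simp only [Set.mem_iUnion]
        exact ⟨c, ⟨Or.inl rfl, ho⟩, h⟩

theorem main_aux (hM : M.IsMatching) (hbse : BaseFn G M bse)
    {v b : V} {t : ℕ} (ht : tenacity G M v = (t : ℕ∞)) (hlm : (t : ℕ∞) < lm G M)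
    (hbv : bse v = b)
    (p : G.Walk b v) (hp : p.IsPath) (halt : IsAlt G M p)
    (hmin : (Even p.length ∧ (p.length : ℕ∞) = evenlevelFrom G M b v) ∨
            (Odd p.length ∧ (p.length : ℕ∞) = oddlevelFrom G M b v)) :
    ∀ u ∈ p.support, u ∈ insert b (blossom G M bse t b) := by
  have hto := ten_odd ht
  obtain ⟨k, hk⟩ := Nat.not_even_iff_odd.mp hto
  have hKv : Kf G M bse t v = b := by
    rw [hk]
    have h1 : Kf G M bse (2*k) v = v := by
      apply K_high; rw [ht, hk]; exact_mod_cast Nat.lt_succ_self _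
    simp only [Kf]
    rw [h1, if_pos (by rw [ht, hk]), hbv]
  obtain ⟨x, n, hx, hxe, hpar, hlev⟩ := low_min ht.le p.length
  obtain ⟨i, hi, h1, h2, h3, h4, h5⟩ := K_path hM hbse hlm hx
  rw [hxe, hKv] at h1
  have hin : i < n := by
    rcases hi.eq_or_lt with h | h
    · rw [h, hxe, ht] at h2; exact absurd h2 (lt_irrefl _)
    · exact h
  have hie := h5 hin
  obtain ⟨w, hw1, hw2, hw3, -⟩ := walk_of_AP (hx.1.1.drop hi hie)
  have hwb : x (i + 0) = b := by simpa using h1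
  have hwv : x (i + (n - i)) = v := by rw [show i + (n - i) = n by omega, hxe]
  have hlen : p.length ≤ n - i := by
    have key : ∀ {b' v' : V} (w : G.Walk b' v'), b' = b → v' = v → w.length = n - i →
        w.IsPath → IsAlt G M w → p.length ≤ n - i := by
      intro b' v' w hb' hv' hl hpa hal
      subst hb' hv'
      rcases hmin with ⟨he, hm⟩ | ⟨he, hm⟩
      · have : evenlevelFrom G M b' v' ≤ ((n - i : ℕ) : ℕ∞) :=
          sInf_le ⟨w, hpa, hal, by rw [hl]; grind, by rw [hl]⟩
        rw [← hm] at this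
        exact_mod_cast this
      · have : oddlevelFrom G M b' v' ≤ ((n - i : ℕ) : ℕ∞) :=
          sInf_le ⟨w, hpa, hal, by rw [hl]; grind, by rw [hl]⟩
        rw [← hm] at this
        exact_mod_cast this
    exact key w hwb hwv hw1 hw2 hw3
  have hall := JJ hM hbse hlm (F1_all hM hbse t hlm) (e0 := i) (AP_of_walk p hp halt)
    (by simp [ht]) (by simp [hKv])
    (by rw [SimpleGraph.Walk.getVert_zero, ← h1]; exact (by rw [← lev_even hie, h4.2]))
    (by
      rw [SimpleGraph.Walk.getVert_length, hlev]
      exact_mod_cast (by omega : p.length + i ≤ n))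
  intro u hu
  obtain ⟨j, hj, hjl⟩ := SimpleGraph.Walk.mem_support_iff_exists_getVert.mp hu
  have hK := hall j hjl
  rw [hj, SimpleGraph.Walk.getVert_zero] at hK
  rcases lt_or_ge (t:ℕ∞) (tenacity G M u) with h | h
  · left; rw [← hK, K_high h]
  · right
    have := mem_blossom hM hbse k (hk ▸ hlm) u (hk ▸ h)
    rw [← hk, hK] at this
    exact this

end Work

/-- Every vertex of a minimum even (or odd) alternating path from `b = base(v)` to `v`
starting with an unmatched edge lies in `B_{b,t} ∪ {b}`, where `t = tenacity(v) < l_m`. -/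
theorem stmt12 (G : SimpleGraph V) (M : G.Subgraph) (hM : M.IsMatching)
    (bse : V → V) (hbse : BaseFn G M bse)
    (v b : V) (t : ℕ) (ht : tenacity G M v = (t : ℕ∞)) (hlm : (t : ℕ∞) < lm G M)
    (hbase : IsBase G M v b) (hbv : bse v = b)
    (p : G.Walk b v) (hp : p.IsPath) (halt : IsAlt G M p)
    (hmin : (Even p.length ∧ (p.length : ℕ∞) = evenlevelFrom G M b v) ∨
            (Odd p.length ∧ (p.length : ℕ∞) = oddlevelFrom G M b v)) :
    ∀ u ∈ p.support, u ∈ insert b (blossom G M bse t b) := by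
  exact main_aux hM hbse ht hlm hbv p hp halt hmin

end MV
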